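/- arXiv:1403.5302 — 2 statements merged into one kernel-verified Lean document; each statement's English description precedes it below -/
import Mathlib

section
/- Let t > 0, λ > 0, η₁ > 1, η₂ > 0, p, q > 0 with p + q = 1, and let U be a probability density on (0,∞) such that U(x) = B₁·x^{−A₃}·exp{A₂·√(log x)}·(log x)^{κ}·(1 + O((log x)^{−1/2})) as x → ∞ and U(x) = B̃₁·x^{Ã₃}·exp{Ã₂·√(log(1/x))}·(log(1/x))^{κ}·(1 + O((log(1/x))^{−1/2})) as x → 0, where B₁, B̃₁ > 0, A₂, Ã₂ ∈ ℝ, κ ∈ ℝ, A₃ > 2, Ã₃ > −1, and 1 + η₁ > A₃. Define D(x) = e^{−λt}·U(x) + (U ⋆_M H(t,·))(x) for x > 0. Then D(x) = [e^{−λt} + m_{A₃−1}(H(t,·))]·B₁·x^{−A₃}·exp{A₂·√(log x)}·(log x)^{κ}·(1 + O((log x)^{−1/2})) as x → ∞, where m_{A₃−1}(H(t,·)) = ∫_0^∞ x^{A₃−1} H(t,x) dx < ∞. -/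
open Filter Asymptotics MeasureTheory

/-- `P_{n,k}` from Kou's double exponential jump model: `P_{n,n} = p^n` and, for
`1 ≤ k ≤ n−1`,
`P_{n,k} = Σ_{i=k}^{n−1} C(n−k−1, i−k) C(n,i) (η₁/(η₁+η₂))^{i−k} (η₂/(η₁+η₂))^{n−i} p^i q^{n−i}`. -/
noncomputable def Pcoef (η₁ η₂ p q : ℝ) (n k : ℕ) : ℝ :=
  if k = n then p ^ n
  else ∑ i ∈ Finset.Ico k n,
    ((n - k - 1).choose (i - k) : ℝ) * (n.choose i : ℝ) *
      (η₁ / (η₁ + η₂)) ^ (i - k) * (η₂ / (η₁ + η₂)) ^ (n - i) * p ^ i * q ^ (n - i)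

/-- `Q_{n,k}` from Kou's double exponential jump model: `Q_{n,n} = q^n` and, for
`1 ≤ k ≤ n−1`,
`Q_{n,k} = Σ_{i=k}^{n−1} C(n−k−1, i−k) C(n,i) (η₁/(η₁+η₂))^{n−i} (η₂/(η₁+η₂))^{i−k} p^{n−i} q^i`. -/
noncomputable def Qcoef (η₁ η₂ p q : ℝ) (n k : ℕ) : ℝ :=
  if k = n then q ^ n
  else ∑ i ∈ Finset.Ico k n,
    ((n - k - 1).choose (i - k) : ℝ) * (n.choose i : ℝ) *
      (η₁ / (η₁ + η₂)) ^ (n - i) * (η₂ / (η₁ + η₂)) ^ (i - k) * p ^ (n - i) * q ^ i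

/-- The Poisson weights `π_n = e^{−λt} (λt)^n / n!`. -/
noncomputable def poisCoef (lam t : ℝ) (n : ℕ) : ℝ :=
  Real.exp (-(lam * t)) * (lam * t) ^ n / (n.factorial : ℝ)

/-- `a_k = (η₁^{k+1}/k!) Σ_{n=k+1}^∞ π_n P_{n,k+1}` (the series is reindexed by
`n = m + (k+1)`, `m ≥ 0`). -/
noncomputable def aCoef (lam t η₁ η₂ p q : ℝ) (k : ℕ) : ℝ :=
  η₁ ^ (k + 1) / (k.factorial : ℝ) *
    ∑' m : ℕ, poisCoef lam t (m + (k + 1)) * Pcoef η₁ η₂ p q (m + (k + 1)) (k + 1)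

/-- `b_k = (η₂^{k+1}/k!) Σ_{n=k+1}^∞ π_n Q_{n,k+1}` (the series is reindexed by
`n = m + (k+1)`, `m ≥ 0`). -/
noncomputable def bCoef (lam t η₁ η₂ p q : ℝ) (k : ℕ) : ℝ :=
  η₂ ^ (k + 1) / (k.factorial : ℝ) *
    ∑' m : ℕ, poisCoef lam t (m + (k + 1)) * Qcoef η₁ η₂ p q (m + (k + 1)) (k + 1)

/-- `G₁(t,u) = Σ_{k=0}^∞ a_k u^k`. -/
noncomputable def G1 (lam t η₁ η₂ p q : ℝ) (u : ℝ) : ℝ :=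
  ∑' k : ℕ, aCoef lam t η₁ η₂ p q k * u ^ k

/-- `G₂(t,−u) = Σ_{k=0}^∞ b_k u^k`; `G2m lam t η₁ η₂ p q u` stands for `G₂(t,−u)`. -/
noncomputable def G2m (lam t η₁ η₂ p q : ℝ) (u : ℝ) : ℝ :=
  ∑' k : ℕ, bCoef lam t η₁ η₂ p q k * u ^ k

/-- `H₁(t,x) = G₁(t, log x)` for `x > 1`. -/
noncomputable def H1fun (lam t η₁ η₂ p q : ℝ) (x : ℝ) : ℝ :=
  G1 lam t η₁ η₂ p q (Real.log x)

/-- `H₂(t,x) = G₂(t, log x) = G2m(t, log(1/x))` for `0 < x < 1`. -/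
noncomputable def H2fun (lam t η₁ η₂ p q : ℝ) (x : ℝ) : ℝ :=
  G2m lam t η₁ η₂ p q (Real.log x⁻¹)

/-- The density of the absolutely continuous part of the law of the exponential compound
Poisson factor: `H(t,x) = H₁(t,x) x^{−η₁−1}` for `x > 1` and `H(t,x) = H₂(t,x) x^{η₂−1}`
for `0 < x < 1`. -/
noncomputable def Hfun (lam t η₁ η₂ p q : ℝ) (x : ℝ) : ℝ :=
  if 1 < x then H1fun lam t η₁ η₂ p q x * x ^ (-η₁ - 1)
  else H2fun lam t η₁ η₂ p q x * x ^ (η₂ - 1)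

/-- The Mellin convolution of two measurable functions on `(0,∞)`:
`f ⋆_M g (x) = ∫_0^∞ f(x/t) g(t) dt/t`. -/
noncomputable def mellinConv (f g : ℝ → ℝ) (x : ℝ) : ℝ :=
  ∫ t in Set.Ioi (0:ℝ), f (x / t) * g t / t


lemma Pcoef_nonneg {a b p q : ℝ} (ha : 0 < a) (hb : 0 < b) (hp : 0 < p) (hq : 0 < q) (n k : ℕ) :
    0 ≤ Pcoef a b p q n k := by
  unfold Pcoef
  split_ifs
  · positivity
  · apply Finset.sum_nonneg
    intro i _
    positivity

lemma Pcoef_le {a b p q : ℝ} (ha : 0 < a) (hb : 0 < b) (hp : 0 < p) (hq : 0 < q)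
    (hpq : p + q = 1) (n k : ℕ) :
    Pcoef a b p q n k ≤ 4 ^ n := by
  have hr0 : 0 ≤ a / (a + b) := by positivity
  have hs0 : 0 ≤ b / (a + b) := by positivity
  have hr1 : a / (a + b) ≤ 1 := by rw [div_le_one (by positivity)]; linarith
  have hs1 : b / (a + b) ≤ 1 := by rw [div_le_one (by positivity)]; linarith
  unfold Pcoef
  split_ifs
  · calc p ^ n ≤ 1 := pow_le_one₀ hp.le (by linarith)
      _ ≤ 4 ^ n := one_le_pow₀ (by norm_num)
  · calc _ ≤ ∑ i ∈ Finset.Ico k n, (2:ℝ) ^ n * (n.choose i : ℝ) := by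
          apply Finset.sum_le_sum
          intro i _
          have h1 : ((n - k - 1).choose (i - k) : ℝ) ≤ 2 ^ n := by
            have h : (n - k - 1).choose (i - k) ≤ 2 ^ n :=
              (Nat.choose_le_two_pow _ _).trans (Nat.pow_le_pow_right (by norm_num) (by omega))
            exact_mod_cast h
          have e1 := pow_le_one₀ (n := i - k) hr0 hr1
          have e2 := pow_le_one₀ (n := n - i) hs0 hs1
          have e3 := pow_le_one₀ (n := i) hp.le (by linarith : p ≤ 1)
          have e4 := pow_le_one₀ (n := n - i) hq.le (by linarith : q ≤ 1)
          calc _ ≤ (2:ℝ) ^ n * (n.choose i : ℝ) * 1 * 1 * 1 * 1 := by gcongr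
            _ = _ := by ring
      _ = (2:ℝ) ^ n * ∑ i ∈ Finset.Ico k n, (n.choose i : ℝ) := by rw [Finset.mul_sum]
      _ ≤ (2:ℝ) ^ n * ∑ i ∈ Finset.range (n + 1), (n.choose i : ℝ) := by
          gcongr
          intro i hi
          simp at hi ⊢
          omega
      _ = 4 ^ n := by
          have : ∑ i ∈ Finset.range (n + 1), (n.choose i : ℝ) = 2 ^ n := by
            exact_mod_cast Nat.sum_range_choose n
          rw [this, ← mul_pow]; norm_num

lemma Qcoef_eq (a b p q : ℝ) (n k : ℕ) : Qcoef a b p q n k = Pcoef b a q p n k := by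
  unfold Qcoef Pcoef
  split_ifs
  · rfl
  · apply Finset.sum_congr rfl
    intro i _
    rw [add_comm b a]; ring

lemma bCoef_eq (lam t a b p q : ℝ) (k : ℕ) : bCoef lam t a b p q k = aCoef lam t b a q p k := by
  simp only [bCoef, aCoef, Qcoef_eq]

lemma G2m_eq (lam t a b p q : ℝ) (u : ℝ) : G2m lam t a b p q u = G1 lam t b a q p u := by
  simp only [G2m, G1, bCoef_eq]

lemma aCoef_nonneg {lam t a b p q : ℝ} (ht : 0 < t) (hlam : 0 < lam)
    (ha : 0 < a) (hb : 0 < b) (hp : 0 < p) (hq : 0 < q) (k : ℕ) :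
    0 ≤ aCoef lam t a b p q k := by
  unfold aCoef poisCoef
  refine mul_nonneg (by positivity) (tsum_nonneg fun m => mul_nonneg (by positivity) ?_)
  exact Pcoef_nonneg ha hb hp hq _ _

lemma aCoef_le {lam t a b p q : ℝ} (ht : 0 < t) (hlam : 0 < lam)
    (ha : 0 < a) (hb : 0 < b) (hp : 0 < p) (hq : 0 < q) (hpq : p + q = 1) :
    ∃ C c : ℝ, 0 < C ∧ 0 < c ∧ ∀ k : ℕ,
      aCoef lam t a b p q k ≤ C * (c ^ k / (k.factorial : ℝ)) / (k.factorial : ℝ) := by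
  set μ : ℝ := 4 * (lam * t) with hμ
  have hμ0 : 0 < μ := by positivity
  refine ⟨a * μ * Real.exp μ, a * μ, by positivity, by positivity, fun k => ?_⟩
  have hterm : ∀ m : ℕ, poisCoef lam t (m + (k + 1)) * Pcoef a b p q (m + (k + 1)) (k + 1)
      ≤ μ ^ (k+1) / (k.factorial : ℝ) * (μ ^ m / (m.factorial : ℝ)) := by
    intro m
    have hP := Pcoef_le ha hb hp hq hpq (m + (k+1)) (k+1)
    have hf : ((m.factorial : ℝ) * (k.factorial : ℝ)) ≤ ((m + (k+1)).factorial : ℝ) := by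
      have h1 : m.factorial * k.factorial ≤ (m + (k+1)).factorial :=
        (Nat.mul_le_mul_left _ (Nat.factorial_le (Nat.le_succ k))).trans
          (Nat.le_of_dvd (Nat.factorial_pos _) (Nat.factorial_mul_factorial_dvd_factorial_add _ _))
      exact_mod_cast h1
    have he : Real.exp (-(lam * t)) ≤ 1 := by
      apply Real.exp_le_one_iff.2
      have : 0 < lam * t := by positivity
      linarith
    unfold poisCoef
    calc _ ≤ 1 * (lam * t) ^ (m + (k+1)) / ((m.factorial : ℝ) * (k.factorial : ℝ)) *
            4 ^ (m + (k+1)) := by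
          gcongr
          exact Pcoef_nonneg ha hb hp hq _ _
      _ = _ := by rw [hμ]; simp only [mul_pow, pow_add]; field_simp
  have hs : Summable fun m : ℕ => μ ^ (k+1) / (k.factorial : ℝ) * (μ ^ m / (m.factorial : ℝ)) :=
    (Real.summable_pow_div_factorial μ).mul_left _
  have hnn : ∀ m : ℕ, 0 ≤ poisCoef lam t (m + (k + 1)) * Pcoef a b p q (m + (k + 1)) (k + 1) := by
    intro m
    unfold poisCoef
    exact mul_nonneg (by positivity) (Pcoef_nonneg ha hb hp hq _ _)
  have hle := (Summable.of_nonneg_of_le hnn hterm hs).tsum_le_tsum hterm hs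
  rw [tsum_mul_left] at hle
  have hexp : ∑' m : ℕ, μ ^ m / (m.factorial : ℝ) = Real.exp μ := by
    rw [Real.exp_eq_exp_ℝ, NormedSpace.exp_eq_tsum_div]
  rw [hexp] at hle
  unfold aCoef
  calc _ ≤ a ^ (k + 1) / (k.factorial : ℝ) * (μ ^ (k+1) / (k.factorial : ℝ) * Real.exp μ) := by
        gcongr
    _ = _ := by simp only [mul_pow, pow_succ]; ring

lemma G1_summable {lam t a b p q : ℝ} (ht : 0 < t) (hlam : 0 < lam)
    (ha : 0 < a) (hb : 0 < b) (hp : 0 < p) (hq : 0 < q) (hpq : p + q = 1) (u : ℝ) :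
    Summable fun k : ℕ => aCoef lam t a b p q k * u ^ k := by
  obtain ⟨C, c, hC, hc, h⟩ := aCoef_le ht hlam ha hb hp hq hpq
  refine Summable.of_norm_bounded (g := fun k : ℕ => C * Real.exp c * (|u| ^ k / (k.factorial : ℝ)))
    ((Real.summable_pow_div_factorial |u|).mul_left _) fun k => ?_
  rw [Real.norm_eq_abs, abs_mul, abs_pow, abs_of_nonneg (aCoef_nonneg ht hlam ha hb hp hq k)]
  calc _ ≤ C * (c ^ k / (k.factorial : ℝ)) / (k.factorial : ℝ) * |u| ^ k := by gcongr; exact h k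
    _ ≤ C * Real.exp c / (k.factorial : ℝ) * |u| ^ k := by
        gcongr; exact Real.pow_div_factorial_le_exp c hc.le k
    _ = _ := by ring

lemma G1_nonneg {lam t a b p q : ℝ} (ht : 0 < t) (hlam : 0 < lam)
    (ha : 0 < a) (hb : 0 < b) (hp : 0 < p) (hq : 0 < q) {u : ℝ} (hu : 0 ≤ u) :
    0 ≤ G1 lam t a b p q u :=
  tsum_nonneg fun k => mul_nonneg (aCoef_nonneg ht hlam ha hb hp hq k) (pow_nonneg hu k)

lemma G1_le {lam t a b p q : ℝ} (ht : 0 < t) (hlam : 0 < lam)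
    (ha : 0 < a) (hb : 0 < b) (hp : 0 < p) (hq : 0 < q) (hpq : p + q = 1) {ε : ℝ} (hε : 0 < ε) :
    ∃ C : ℝ, 0 < C ∧ ∀ u : ℝ, 0 ≤ u → G1 lam t a b p q u ≤ C * Real.exp (ε * u) := by
  obtain ⟨C, c, hC, hc, h⟩ := aCoef_le ht hlam ha hb hp hq hpq
  refine ⟨C * Real.exp (c / ε), by positivity, fun u hu => ?_⟩
  have hexp : ∑' m : ℕ, (ε * u) ^ m / (m.factorial : ℝ) = Real.exp (ε * u) := by
    rw [Real.exp_eq_exp_ℝ, NormedSpace.exp_eq_tsum_div]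
  rw [← hexp, ← tsum_mul_left]
  refine (G1_summable ht hlam ha hb hp hq hpq u).tsum_le_tsum (fun k => ?_)
    ((Real.summable_pow_div_factorial (ε * u)).mul_left _)
  calc _ ≤ C * (c ^ k / (k.factorial : ℝ)) / (k.factorial : ℝ) * u ^ k := by gcongr; exact h k
    _ = C * ((c / ε) ^ k / (k.factorial : ℝ)) * ((ε * u) ^ k / (k.factorial : ℝ)) := by
        rw [div_pow, mul_pow]; field_simp
    _ ≤ _ := by
        gcongr; exact Real.pow_div_factorial_le_exp _ (by positivity) k

lemma G1_measurable {lam t a b p q : ℝ} (ht : 0 < t) (hlam : 0 < lam)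
    (ha : 0 < a) (hb : 0 < b) (hp : 0 < p) (hq : 0 < q) (hpq : p + q = 1) :
    Measurable (G1 lam t a b p q) := by
  refine measurable_of_tendsto_metrizable
    (f := fun (n : ℕ) (u : ℝ) => ∑ k ∈ Finset.range n, aCoef lam t a b p q k * u ^ k) ?_ ?_
  · intro n
    fun_prop
  · rw [tendsto_pi_nhds]
    intro u
    exact (G1_summable ht hlam ha hb hp hq hpq u).hasSum.tendsto_sum_nat

lemma Hfun_measurable {lam t a b p q : ℝ} (ht : 0 < t) (hlam : 0 < lam)
    (ha : 0 < a) (hb : 0 < b) (hp : 0 < p) (hq : 0 < q) (hpq : p + q = 1) :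
    Measurable (Hfun lam t a b p q) := by
  have h1 := G1_measurable ht hlam ha hb hp hq hpq
  have h2 := G1_measurable ht hlam hb ha hq hp (by linarith)
  unfold Hfun H1fun H2fun
  simp only [G2m_eq]
  refine Measurable.ite measurableSet_Ioi ?_ ?_
  · exact (h1.comp Real.measurable_log).mul (by fun_prop)
  · exact (h2.comp (Real.measurable_log.comp measurable_inv)).mul (by fun_prop)

lemma Hfun_nonneg {lam t a b p q : ℝ} (ht : 0 < t) (hlam : 0 < lam)
    (ha : 0 < a) (hb : 0 < b) (hp : 0 < p) (hq : 0 < q) {y : ℝ} (hy : 0 < y) :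
    0 ≤ Hfun lam t a b p q y := by
  unfold Hfun H1fun H2fun
  simp only [G2m_eq]
  split_ifs with h
  · exact mul_nonneg (G1_nonneg ht hlam ha hb hp hq (Real.log_nonneg h.le))
      (Real.rpow_nonneg hy.le _)
  · exact mul_nonneg (G1_nonneg ht hlam hb ha hq hp
      (Real.log_nonneg ((one_le_inv₀ hy).2 (not_lt.1 h)))) (Real.rpow_nonneg hy.le _)

lemma Hfun_le {lam t a b p q : ℝ} (ht : 0 < t) (hlam : 0 < lam)
    (ha : 0 < a) (hb : 0 < b) (hp : 0 < p) (hq : 0 < q) (hpq : p + q = 1) {ε : ℝ} (hε : 0 < ε) :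
    ∃ C : ℝ, 0 < C ∧ (∀ y : ℝ, 1 < y → Hfun lam t a b p q y ≤ C * y ^ (-a - 1 + ε)) ∧
      (∀ y : ℝ, 0 < y → y ≤ 1 → Hfun lam t a b p q y ≤ C * y ^ (b - 1 - ε)) := by
  obtain ⟨C, hC, h1⟩ := G1_le ht hlam ha hb hp hq hpq hε
  obtain ⟨C', hC', h2⟩ := G1_le ht hlam hb ha hq hp (by linarith : q + p = 1) hε
  refine ⟨max C C', by positivity, fun y hy => ?_, fun y hy hy1 => ?_⟩
  · have hy0 : 0 < y := by linarith
    unfold Hfun H1fun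
    rw [if_pos hy]
    calc _ ≤ (C * Real.exp (ε * Real.log y)) * y ^ (-a-1) := by
          gcongr; exact h1 _ (Real.log_nonneg hy.le)
      _ = C * y ^ (-a - 1 + ε) := by
          rw [Real.rpow_add hy0, Real.rpow_def_of_pos hy0 ε, mul_comm ε]; ring
      _ ≤ _ := by gcongr; exact le_max_left _ _
  · unfold Hfun H2fun
    rw [if_neg (not_lt.2 hy1), G2m_eq]
    calc _ ≤ (C' * Real.exp (ε * Real.log y⁻¹)) * y ^ (b-1) := by
          gcongr; exact h2 _ (Real.log_nonneg ((one_le_inv₀ hy).2 hy1))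
      _ = C' * y ^ (b - 1 - ε) := by
          rw [sub_eq_add_neg (b-1), Real.rpow_add hy, Real.rpow_def_of_pos hy (-ε), Real.log_inv]
          ring_nf
      _ ≤ _ := by gcongr; exact le_max_right _ _

lemma gdiff_aux (A κ : ℝ) {s L : ℝ} (hs : 1 ≤ s) (hL : 1 ≤ L) :
    |(A * Real.sqrt s + κ * Real.log s) - (A * Real.sqrt L + κ * Real.log L)|
      ≤ (|A| + 2 * |κ|) * (|s - L| / Real.sqrt L) := by
  have hs0 : 0 < s := by linarith
  have hL0 : 0 < L := by linarith
  have hrs : 1 ≤ Real.sqrt s := Real.one_le_sqrt.2 hs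
  have hrL : 1 ≤ Real.sqrt L := Real.one_le_sqrt.2 hL
  have qs := Real.sq_sqrt hs0.le
  have qL := Real.sq_sqrt hL0.le
  set r := Real.sqrt s
  set R := Real.sqrt L
  have hR0 : 0 < R := by linarith
  have hr0 : 0 < r := by linarith
  have hfac : |s - L| = |r - R| * (r + R) := by
    rw [← qs, ← qL, show r ^ 2 - R ^ 2 = (r - R) * (r + R) by ring, abs_mul,
      abs_of_pos (by linarith : 0 < r + R)]
  have h1 : |r - R| ≤ |s - L| / R := by
    rw [le_div_iff₀ hR0, hfac]
    gcongr
    linarith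
  have hls : Real.log s = 2 * Real.log r := by rw [← qs, Real.log_pow]; norm_num
  have hlL : Real.log L = 2 * Real.log R := by rw [← qL, Real.log_pow]; norm_num
  have h2' : |Real.log r - Real.log R| ≤ |r - R| := by
    rw [abs_le]
    constructor
    · have h := Real.log_le_sub_one_of_pos (div_pos hR0 hr0)
      rw [Real.log_div hR0.ne' hr0.ne'] at h
      have h3 : R / r - 1 ≤ |r - R| := by
        rw [show R / r - 1 = (R - r) / r by field_simp, div_le_iff₀ hr0]
        calc R - r ≤ |r - R| := by rw [abs_sub_comm]; exact le_abs_self _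
          _ ≤ |r - R| * r := le_mul_of_one_le_right (abs_nonneg _) hrs
      linarith
    · have h := Real.log_le_sub_one_of_pos (div_pos hr0 hR0)
      rw [Real.log_div hr0.ne' hR0.ne'] at h
      have h3 : r / R - 1 ≤ |r - R| := by
        rw [show r / R - 1 = (r - R) / R by field_simp, div_le_iff₀ hR0]
        calc r - R ≤ |r - R| := le_abs_self _
          _ ≤ |r - R| * R := le_mul_of_one_le_right (abs_nonneg _) hrL
      linarith
  have h2 := h2'.trans h1
  rw [hls, hlL]
  calc |(A * r + κ * (2 * Real.log r)) - (A * R + κ * (2 * Real.log R))|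
      = |A * (r - R) + 2 * κ * (Real.log r - Real.log R)| := by congr 1; ring
    _ ≤ |A * (r - R)| + |2 * κ * (Real.log r - Real.log R)| := abs_add_le _ _
    _ = |A| * |r - R| + 2 * |κ| * |Real.log r - Real.log R| := by
        simp only [abs_mul]; norm_num
    _ ≤ |A| * (|s - L| / R) + 2 * |κ| * (|s - L| / R) := by gcongr
    _ = _ := by ring

lemma exp_sub_one_aux (d : ℝ) : |Real.exp d - 1| ≤ |d| * Real.exp |d| := by
  rcases le_total 0 d with h | h
  · rw [abs_of_nonneg h, abs_of_nonneg (by linarith [Real.add_one_le_exp d])]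
    have h1 := Real.add_one_le_exp (-d)
    have h2 : Real.exp (-d) * Real.exp d = 1 := by rw [← Real.exp_add]; simp
    nlinarith [Real.exp_pos d]
  · have h0 : Real.exp d ≤ 1 := Real.exp_le_one_iff.2 h
    rw [abs_of_nonpos h, abs_of_nonpos (by linarith)]
    have h1 := Real.add_one_le_exp d
    have h2 : 1 ≤ Real.exp (-d) := Real.one_le_exp (by linarith)
    nlinarith

lemma weight_eq (A₂ κ : ℝ) {L : ℝ} (hL : 1 ≤ L) :
    Real.exp (A₂ * Real.sqrt L) * L ^ κ = Real.exp (A₂ * Real.sqrt L + κ * Real.log L) := by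
  rw [Real.exp_add, Real.rpow_def_of_pos (by linarith), mul_comm κ]

lemma rpow_neg_half {L : ℝ} (hL : 0 < L) : L ^ (-(1:ℝ)/2) = (Real.sqrt L)⁻¹ := by
  rw [neg_div, Real.rpow_neg hL.le, Real.sqrt_eq_rpow]

lemma weight_eq' (A₂ κ : ℝ) {L : ℝ} (hL : 1 ≤ L) :
    Real.exp (A₂ * Real.sqrt L) * L ^ κ * L ^ (-(1:ℝ)/2)
      = Real.exp (A₂ * Real.sqrt L + (κ + (-(1:ℝ)/2)) * Real.log L) := by
  rw [← weight_eq A₂ _ hL, mul_assoc, ← Real.rpow_add (by linarith)]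

/-- comparison of weights -/
lemma weight_diff (A₂ κ : ℝ) {ε s L : ℝ} (hε : 0 < ε) (hs : 1 ≤ s) (hL : 1 ≤ L)
    (hbig : (|A₂| + 2 * |κ|) / Real.sqrt L ≤ ε) :
    |Real.exp (A₂ * Real.sqrt s) * s ^ κ - Real.exp (A₂ * Real.sqrt L) * L ^ κ|
      ≤ (|A₂| + 2 * |κ|) / ε * Real.exp (2 * ε * |s - L|) *
        (Real.exp (A₂ * Real.sqrt L) * L ^ κ * L ^ (-(1:ℝ)/2)) := by
  rw [rpow_neg_half (by linarith), weight_eq A₂ κ hs, weight_eq A₂ κ hL]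
  have hd := gdiff_aux A₂ κ hs hL
  set g₁ := A₂ * Real.sqrt s + κ * Real.log s
  set g₂ := A₂ * Real.sqrt L + κ * Real.log L
  set K := |A₂| + 2 * |κ|
  have hK : 0 ≤ K := by positivity
  have hR : 0 < Real.sqrt L := Real.sqrt_pos.2 (by linarith)
  have h1 : |g₁ - g₂| ≤ ε * |s - L| := by
    calc _ ≤ _ := hd
      _ = K / Real.sqrt L * |s - L| := by ring
      _ ≤ _ := by gcongr
  have hv : |s - L| ≤ Real.exp (ε * |s - L|) / ε := by
    rw [le_div_iff₀ hε]
    linarith [Real.add_one_le_exp (ε * |s - L|)]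
  have e : Real.exp g₁ - Real.exp g₂ = Real.exp g₂ * (Real.exp (g₁ - g₂) - 1) := by
    rw [Real.exp_sub]; field_simp
  rw [e, abs_mul, abs_of_pos (Real.exp_pos _)]
  calc _ ≤ Real.exp g₂ * (|g₁ - g₂| * Real.exp |g₁ - g₂|) := by
        gcongr; exact exp_sub_one_aux _
    _ ≤ Real.exp g₂ * (K * ((Real.exp (ε * |s - L|) / ε) / Real.sqrt L) *
          Real.exp (ε * |s - L|)) := by
        gcongr
        exact hd.trans (by gcongr)
    _ = _ := by
        have h2 : Real.exp (2 * ε * |s - L|) = Real.exp (ε * |s - L|) * Real.exp (ε * |s - L|) := by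
          rw [← Real.exp_add]; congr 1; ring
        rw [h2]
        ring

lemma weight_le (A₂ κ : ℝ) {ε s L : ℝ} (hs : 1 ≤ s) (hL : 1 ≤ L)
    (hbig : (|A₂| + 2 * |κ|) / Real.sqrt L ≤ ε) :
    Real.exp (A₂ * Real.sqrt s) * s ^ κ
      ≤ Real.exp (ε * |s - L|) * (Real.exp (A₂ * Real.sqrt L) * L ^ κ) := by
  rw [weight_eq A₂ κ hs, weight_eq A₂ κ hL, ← Real.exp_add]
  apply Real.exp_le_exp.2
  have hd := (le_abs_self _).trans (gdiff_aux A₂ κ hs hL)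
  have h : (|A₂| + 2 * |κ|) * (|s - L| / Real.sqrt L) ≤ ε * |s - L| := by
    calc _ = (|A₂| + 2 * |κ|) / Real.sqrt L * |s - L| := by ring
      _ ≤ _ := by gcongr
  linarith

lemma weight_ge (A₂ κ : ℝ) {ε L : ℝ} (hL : 1 ≤ L)
    (hbig : (|A₂| + 2 * |κ|) / Real.sqrt L ≤ ε) :
    Real.exp A₂ * Real.exp (- (ε * L)) ≤ Real.exp (A₂ * Real.sqrt L) * L ^ κ := by
  rw [weight_eq A₂ κ hL, ← Real.exp_add]
  apply Real.exp_le_exp.2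
  have hd := (le_abs_self _).trans (gdiff_aux A₂ κ le_rfl hL)
  simp only [Real.sqrt_one, Real.log_one] at hd
  have h : (|A₂| + 2 * |κ|) * (|1 - L| / Real.sqrt L) ≤ ε * L := by
    calc _ = (|A₂| + 2 * |κ|) / Real.sqrt L * |1 - L| := by ring
      _ ≤ (|A₂| + 2 * |κ|) / Real.sqrt L * L := by
          gcongr
          rw [abs_le]; constructor <;> linarith
      _ ≤ _ := by gcongr
  linarith

lemma U_comp {U : ℝ → ℝ} (hU : IntegrableOn U (Set.Ioi 0)) {x : ℝ} (hx : 0 < x) :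
    IntegrableOn (fun y => U (x / y) * y ^ (-(2:ℝ))) (Set.Ioi 0) ∧
    ∫ y in Set.Ioi (0:ℝ), U (x / y) * y ^ (-(2:ℝ)) = x⁻¹ * ∫ y in Set.Ioi (0:ℝ), U y := by
  have h1 : IntegrableOn (fun z => U (x * z)) (Set.Ioi 0) := by
    rw [integrableOn_Ioi_comp_mul_left_iff U 0 hx]; simpa using hU
  have h2 := (integrableOn_Ioi_comp_rpow_iff (fun z => U (x * z))
    (by norm_num : (-1:ℝ) ≠ 0)).2 h1
  have h3 := integral_comp_rpow_Ioi (fun z => U (x * z)) (by norm_num : (-1:ℝ) ≠ 0)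
  have h4 := integral_comp_mul_left_Ioi U 0 hx
  have hcongr : ∀ y ∈ Set.Ioi (0:ℝ), (|(-1:ℝ)| * y ^ ((-1:ℝ) - 1)) • U (x * y ^ (-1:ℝ))
      = U (x / y) * y ^ (-(2:ℝ)) := by
    intro y hy
    rw [Real.rpow_neg_one, abs_neg, abs_one, one_mul, smul_eq_mul, div_eq_mul_inv, mul_comm]
    norm_num
  constructor
  · exact h2.congr_fun hcongr measurableSet_Ioi
  · rw [← setIntegral_congr_fun measurableSet_Ioi hcongr, h3, h4]
    simp

lemma K_integrable {H : ℝ → ℝ} {a b A ε C : ℝ}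
    (hH : Measurable H) (hH0 : ∀ y, 0 < y → 0 ≤ H y)
    (h1 : ∀ y : ℝ, 1 < y → H y ≤ C * y ^ (-a - 1 + ε))
    (h2 : ∀ y : ℝ, 0 < y → y ≤ 1 → H y ≤ C * y ^ (b - 1 - ε))
    (ha : 3 * ε < 1 + a - A) (hb : 3 * ε < A - 1 + b) :
    IntegrableOn (fun y => y ^ (A - 1) * Real.exp (2 * ε * |Real.log y|) * H y) (Set.Ioi 0) := by
  have hm : Measurable (fun y : ℝ => y ^ (A - 1) * Real.exp (2 * ε * |Real.log y|) * H y) := by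
    have : Measurable fun y : ℝ => |Real.log y| := Real.measurable_log.abs
    fun_prop
  rw [← Set.Ioc_union_Ioi_eq_Ioi (zero_le_one' ℝ), integrableOn_union]
  constructor
  · have hi : IntegrableOn (fun y : ℝ => C * y ^ (A - 2 + b - 3 * ε)) (Set.Ioc 0 1) := by
      have := (intervalIntegral.intervalIntegrable_rpow' (a := 0) (b := 1)
        (by linarith : -1 < A - 2 + b - 3 * ε)).const_mul C
      rwa [intervalIntegrable_iff_integrableOn_Ioc_of_le zero_le_one] at this
    refine hi.mono' hm.aestronglyMeasurable ?_
    filter_upwards [ae_restrict_mem measurableSet_Ioc] with y hy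
    have hy0 := hy.1
    rw [Real.norm_eq_abs, abs_of_nonneg (mul_nonneg (by positivity) (hH0 y hy0)),
      abs_of_nonpos (Real.log_nonpos hy0.le hy.2)]
    calc _ ≤ y ^ (A - 1) * Real.exp (2 * ε * -Real.log y) * (C * y ^ (b - 1 - ε)) := by
          gcongr; exact h2 y hy0 hy.2
      _ = C * (y ^ (A - 1) * y ^ (-(2 * ε)) * y ^ (b - 1 - ε)) := by
          rw [Real.rpow_def_of_pos hy0 (-(2 * ε))]; ring_nf
      _ = _ := by
          rw [← Real.rpow_add hy0, ← Real.rpow_add hy0]; ring_nf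
  · have hi : IntegrableOn (fun y : ℝ => C * y ^ (A - 2 - a + 3 * ε)) (Set.Ioi 1) :=
      (integrableOn_Ioi_rpow_of_lt (by linarith) one_pos).const_mul C
    refine hi.mono' hm.aestronglyMeasurable ?_
    filter_upwards [ae_restrict_mem measurableSet_Ioi] with y hy
    have hy1 : 1 < y := hy
    have hy0 : 0 < y := by linarith
    rw [Real.norm_eq_abs, abs_of_nonneg (mul_nonneg (by positivity) (hH0 y hy0)),
      abs_of_nonneg (Real.log_nonneg hy1.le)]
    calc _ ≤ y ^ (A - 1) * Real.exp (2 * ε * Real.log y) * (C * y ^ (-a - 1 + ε)) := by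
          gcongr; exact h1 y hy1
      _ = C * (y ^ (A - 1) * y ^ (2 * ε) * y ^ (-a - 1 + ε)) := by
          rw [Real.rpow_def_of_pos hy0 (2 * ε)]; ring_nf
      _ = _ := by
          rw [← Real.rpow_add hy0, ← Real.rpow_add hy0]; ring_nf

/-- The Heston-type model function. -/
noncomputable def fmod (B A A₂ κ : ℝ) (x : ℝ) : ℝ :=
  B * x ^ (-A) * Real.exp (A₂ * Real.sqrt (Real.log x)) * (Real.log x) ^ κ

lemma eventually_big (K : ℝ) {ε : ℝ} (hε : 0 < ε) :
    ∀ᶠ x : ℝ in atTop, K / Real.sqrt (Real.log x) ≤ ε := by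
  have h : Tendsto (fun x : ℝ => K / Real.sqrt (Real.log x)) atTop (nhds 0) :=
    Tendsto.const_div_atTop (Real.tendsto_sqrt_atTop.comp Real.tendsto_log_atTop) K
  exact (h.eventually_lt_const hε).mono fun x hx => hx.le

lemma conv_pointwise {U : ℝ → ℝ} {B A A₂ κ ε : ℝ} (hB : 0 < B) (hε : 0 < ε)
    (hU_infty : (fun x => U x - fmod B A A₂ κ x) =O[atTop]
      (fun x => fmod B A A₂ κ x * (Real.log x) ^ (-(1:ℝ)/2))) :
    ∃ C X : ℝ, 0 < C ∧ 1 ≤ X ∧ ∀ᶠ x : ℝ in atTop, ∀ y : ℝ, 0 < y →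
      (X ≤ x / y → |U (x / y) - fmod B A A₂ κ x * y ^ A| ≤
        C * (fmod B A A₂ κ x * (Real.log x) ^ (-(1:ℝ)/2)) *
          (y ^ A * Real.exp (2 * ε * |Real.log y|))) ∧
      (x / y < X → fmod B A A₂ κ x * y ^ A ≤
        C * (fmod B A A₂ κ x * (Real.log x) ^ (-(1:ℝ)/2)) *
          (y ^ A * Real.exp (2 * ε * |Real.log y|))) := by
  obtain ⟨C₁, hC₁, hO⟩ := hU_infty.exists_pos
  rw [IsBigOWith, eventually_atTop] at hO
  obtain ⟨X₁, hX₁⟩ := hO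
  set X := max X₁ (Real.exp 1) with hX
  have hXe : Real.exp 1 ≤ X := le_max_right _ _
  have hX0 : 0 < X := (Real.exp_pos 1).trans_le hXe
  have hX1 : 1 ≤ X := le_trans (Real.one_le_exp zero_le_one) hXe
  set K := |A₂| + 2 * |κ| with hK
  have hK0 : 0 ≤ K := by positivity
  set C₃ := Real.exp (ε * Real.log X) / ε with hC₃
  have hC₃0 : 0 < C₃ := by positivity
  refine ⟨C₁ + K / ε + C₃, X, by positivity, hX1, ?_⟩
  filter_upwards [eventually_ge_atTop (Real.exp 1), eventually_big K hε,
    eventually_big (|A₂| + 2 * |κ + (-(1:ℝ)/2)|) hε] with x hx hb1 hb2 y hy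
  have hx0 : 0 < x := (Real.exp_pos 1).trans_le hx
  have hL : 1 ≤ Real.log x := by rwa [Real.le_log_iff_exp_le hx0]
  have hL0 : 0 < Real.log x := by linarith
  set L := Real.log x with hLdef
  have hlog : Real.log (x / y) = L - Real.log y := Real.log_div hx0.ne' hy.ne'
  have habs : |Real.log (x / y) - L| = |Real.log y| := by
    rw [hlog, show L - Real.log y - L = - Real.log y by ring, abs_neg]
  have hpow : (x / y) ^ (-A) = x ^ (-A) * y ^ A := by
    rw [Real.div_rpow hx0.le hy.le, Real.rpow_neg hy.le]; simp
  have hE1 : Real.exp (ε * |Real.log y|) ≤ Real.exp (2 * ε * |Real.log y|) := by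
    apply Real.exp_le_exp.2
    have : 0 ≤ ε * |Real.log y| := by positivity
    linarith
  have hxA : 0 < x ^ (-A) := Real.rpow_pos_of_pos hx0 _
  have hyA : 0 < y ^ A := Real.rpow_pos_of_pos hy _
  constructor
  · intro hxy
    have hxy0 : 0 < x / y := by positivity
    have hs : 1 ≤ Real.log (x / y) := by
      rw [Real.le_log_iff_exp_le hxy0]; exact hXe.trans hxy
    have hU := hX₁ (x / y) ((le_max_left _ _).trans hxy)
    have w1 := weight_diff A₂ κ hε hs hL hb1
    have w2 := weight_le A₂ (κ + (-(1:ℝ)/2)) hs hL hb2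
    rw [habs] at w1 w2
    rw [weight_eq A₂ _ hs, weight_eq A₂ _ hL, ← weight_eq' A₂ _ hs, ← weight_eq' A₂ _ hL] at w2
    simp only [fmod] at hU ⊢
    rw [hpow] at hU
    rw [← hLdef]
    set s := Real.log (x / y)
    set W := Real.exp (A₂ * Real.sqrt L) * L ^ κ with hW
    set V := Real.exp (A₂ * Real.sqrt s) * s ^ κ with hV
    have hV0 : 0 < V := by have : 0 < s := by linarith
                           positivity
    have hW0 : 0 < W := by positivity
    set E := Real.exp (2 * ε * |Real.log y|)
    have hs0 : 0 < s := by linarith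
    have hU' : |U (x / y) - B * (x ^ (-A) * y ^ A) * V| ≤
        C₁ * (B * (x ^ (-A) * y ^ A) * (V * s ^ (-(1:ℝ)/2))) := by
      have h0 : 0 ≤ B * (x ^ (-A) * y ^ A) * (V * s ^ (-(1:ℝ)/2)) := by positivity
      calc _ = ‖U (x / y) - B * (x ^ (-A) * y ^ A) * Real.exp (A₂ * Real.sqrt s) * s ^ κ‖ := by
            rw [Real.norm_eq_abs, hV]; ring_nf
        _ ≤ _ := hU
        _ = C₁ * |B * (x ^ (-A) * y ^ A) * (V * s ^ (-(1:ℝ)/2))| := by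
            rw [Real.norm_eq_abs, hV]; ring_nf
        _ = _ := by rw [abs_of_nonneg h0]
    have e1 : U (x / y) - B * x ^ (-A) * Real.exp (A₂ * Real.sqrt L) * L ^ κ * y ^ A
        = (U (x / y) - B * (x ^ (-A) * y ^ A) * V) + B * (x ^ (-A) * y ^ A) * (V - W) := by
      rw [hW]; ring
    rw [e1]
    calc _ ≤ |U (x / y) - B * (x ^ (-A) * y ^ A) * V| + |B * (x ^ (-A) * y ^ A) * (V - W)| :=
          abs_add_le _ _
      _ = |U (x / y) - B * (x ^ (-A) * y ^ A) * V| + B * (x ^ (-A) * y ^ A) * |V - W| := by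
          rw [abs_mul (B * (x ^ (-A) * y ^ A)), abs_of_pos (by positivity : 0 < B * (x ^ (-A) * y ^ A))]
      _ ≤ C₁ * (B * (x ^ (-A) * y ^ A) * (E * (W * L ^ (-(1:ℝ)/2)))) +
          B * (x ^ (-A) * y ^ A) * (K / ε * E * (W * L ^ (-(1:ℝ)/2))) := by
          refine add_le_add (hU'.trans ?_) ?_
          · have w3 : V * s ^ (-(1:ℝ)/2) ≤ E * (W * L ^ (-(1:ℝ)/2)) := by
              refine w2.trans ?_
              gcongr
            exact mul_le_mul_of_nonneg_left
              (mul_le_mul_of_nonneg_left w3 (by positivity)) hC₁.le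
          · gcongr
      _ = (C₁ + K / ε) * (B * x ^ (-A) * W * L ^ (-(1:ℝ)/2) * (y ^ A * E)) := by ring
      _ ≤ (C₁ + K / ε + C₃) * (B * x ^ (-A) * W * L ^ (-(1:ℝ)/2) * (y ^ A * E)) :=
          mul_le_mul_of_nonneg_right (by linarith) (by positivity)
      _ = _ := by rw [hW]; ring
  · intro hxy
    have hxy0 : 0 < x / y := by positivity
    have hlt : L - Real.log y ≤ Real.log X := by
      rw [← hlog]; exact Real.log_le_log hxy0 hxy.le
    have hf0 : 0 ≤ fmod B A A₂ κ x := by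
      unfold fmod; rw [← hLdef]; positivity
    have hsq : Real.sqrt L ≤ L := by
      rw [Real.sqrt_le_left (by linarith)]; nlinarith
    have h1 : 1 ≤ C₃ * L ^ (-(1:ℝ)/2) * Real.exp (2 * ε * |Real.log y|) := by
      rw [rpow_neg_half hL0]
      have hR : 0 < Real.sqrt L := Real.sqrt_pos.2 hL0
      have h2 : Real.sqrt L ≤ C₃ * Real.exp (2 * ε * |Real.log y|) := by
        calc Real.sqrt L ≤ L := hsq
          _ ≤ Real.exp (ε * L) / ε := by
              rw [le_div_iff₀ hε]; linarith [Real.add_one_le_exp (ε * L)]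
          _ ≤ Real.exp (ε * Real.log X + ε * |Real.log y|) / ε := by
              gcongr
              rw [← mul_add]
              gcongr
              linarith [le_abs_self (Real.log y)]
          _ = C₃ * Real.exp (ε * |Real.log y|) := by rw [Real.exp_add, hC₃]; ring
          _ ≤ _ := by gcongr
      rw [show C₃ * (Real.sqrt L)⁻¹ * Real.exp (2 * ε * |Real.log y|)
        = (C₃ * Real.exp (2 * ε * |Real.log y|)) / Real.sqrt L by ring, le_div_iff₀ hR]
      linarith
    calc fmod B A A₂ κ x * y ^ A = fmod B A A₂ κ x * y ^ A * 1 := by ring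
      _ ≤ fmod B A A₂ κ x * y ^ A * (C₃ * L ^ (-(1:ℝ)/2) * Real.exp (2 * ε * |Real.log y|)) := by
          gcongr
      _ = C₃ * (fmod B A A₂ κ x * L ^ (-(1:ℝ)/2) * (y ^ A * Real.exp (2 * ε * |Real.log y|))) := by
          ring
      _ ≤ (C₁ + K / ε + C₃) *
          (fmod B A A₂ κ x * L ^ (-(1:ℝ)/2) * (y ^ A * Real.exp (2 * ε * |Real.log y|))) := by
          gcongr
          have : 0 ≤ K / ε := by positivity
          linarith
      _ = _ := by ring

lemma conv_main {U H : ℝ → ℝ} {B A A₂ κ ε a C : ℝ} (hB : 0 < B) (hε : 0 < ε) (hC : 0 < C)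
    (hU_meas : Measurable U) (hU0 : ∀ x, 0 ≤ U x) (hUi : IntegrableOn U (Set.Ioi 0))
    (hH : Measurable H) (hH0 : ∀ y, 0 < y → 0 ≤ H y)
    (h1 : ∀ y : ℝ, 1 < y → H y ≤ C * y ^ (-a - 1 + ε))
    (hK : IntegrableOn (fun y => y ^ (A - 1) * Real.exp (2 * ε * |Real.log y|) * H y) (Set.Ioi 0))
    (hm : IntegrableOn (fun y => y ^ (A - 1) * H y) (Set.Ioi 0))
    (haA : A + ε ≤ 1 + a - ε) (haε : ε < a)
    (hU_infty : (fun x => U x - fmod B A A₂ κ x) =O[atTop]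
      (fun x => fmod B A A₂ κ x * (Real.log x) ^ (-(1:ℝ)/2))) :
    (fun x => mellinConv U H x - (∫ y in Set.Ioi (0:ℝ), y ^ (A - 1) * H y) * fmod B A A₂ κ x)
      =O[atTop] (fun x => fmod B A A₂ κ x * (Real.log x) ^ (-(1:ℝ)/2)) := by
  obtain ⟨C₂, X, hC₂, hX, hpt⟩ := conv_pointwise (U := U) hB hε hU_infty
  have hX0 : 0 < X := by linarith
  set J := ∫ y in Set.Ioi (0:ℝ), y ^ (A - 1) * Real.exp (2 * ε * |Real.log y|) * H y with hJ
  set I := ∫ y in Set.Ioi (0:ℝ), U y with hI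
  have hI0 : 0 ≤ I := setIntegral_nonneg measurableSet_Ioi fun y _ => hU0 y
  set C₄ := C * X ^ (a - ε) * I / (B * Real.exp A₂) with hC₄
  refine IsBigO.of_bound (C₂ * J + C₄) ?_
  filter_upwards [hpt, eventually_ge_atTop (Real.exp 1), eventually_gt_atTop X,
    eventually_big (|A₂| + 2 * |κ + (-(1:ℝ)/2)|) hε] with x hpt hx hxX hbig
  have hx0 : 0 < x := (Real.exp_pos 1).trans_le hx
  have hL : 1 ≤ Real.log x := by rwa [Real.le_log_iff_exp_le hx0]
  have hL0 : 0 < Real.log x := by linarith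
  set F := fmod B A A₂ κ x with hF
  set R := F * (Real.log x) ^ (-(1:ℝ)/2) with hR
  have hF0 : 0 < F := by rw [hF]; unfold fmod; positivity
  have hR0 : 0 < R := by positivity
  obtain ⟨hc1, hc2⟩ := U_comp hUi hx0
  set T := C * (x / X) ^ (-(a - ε)) with hT
  have hT0 : 0 < T := by positivity
  -- pointwise bound
  have key : ∀ y ∈ Set.Ioi (0:ℝ), ‖U (x / y) * H y / y - F * (y ^ (A - 1) * H y)‖ ≤
      C₂ * R * (y ^ (A - 1) * Real.exp (2 * ε * |Real.log y|) * H y) +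
        T * (U (x / y) * y ^ (-(2:ℝ))) := by
    intro y hy
    have hy : 0 < y := hy
    have hHy := hH0 y hy
    have hyA : y ^ A = y ^ (A - 1) * y := by
      rw [Real.rpow_sub_one hy.ne']; field_simp
    have e : U (x / y) * H y / y - F * (y ^ (A - 1) * H y)
        = (U (x / y) - F * y ^ A) * (H y / y) := by
      rw [hyA]; field_simp
    obtain ⟨p1, p2⟩ := hpt y hy
    have e2 : C₂ * R * (y ^ A * Real.exp (2 * ε * |Real.log y|)) * (H y / y) =
        C₂ * R * (y ^ (A - 1) * Real.exp (2 * ε * |Real.log y|) * H y) := by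
      rw [hyA]; field_simp
    have hUxy := hU0 (x / y)
    rw [e, norm_mul, Real.norm_eq_abs, Real.norm_eq_abs, abs_of_nonneg (by positivity : 0 ≤ H y / y)]
    rcases le_or_gt X (x / y) with hc | hc
    · have : 0 ≤ T * (U (x / y) * y ^ (-(2:ℝ))) := by positivity
      calc _ ≤ C₂ * R * (y ^ A * Real.exp (2 * ε * |Real.log y|)) * (H y / y) := by
            gcongr; exact p1 hc
        _ ≤ _ := by rw [e2]; linarith
    · have hyx : x / X < y := by
        rw [div_lt_iff₀ hy] at hc
        rw [div_lt_iff₀ hX0]; linarith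
      have hxX1 : 1 < x / X := by rwa [one_lt_div hX0]
      have hy1 : 1 < y := hxX1.trans hyx
      have hHb : H y / y ≤ T * y ^ (-(2:ℝ)) := by
        calc H y / y ≤ C * y ^ (-a - 1 + ε) / y := by gcongr; exact h1 y hy1
          _ = C * (y ^ (-(a - ε)) * y ^ (-(2:ℝ))) := by
              rw [← Real.rpow_add hy, mul_div_assoc, ← Real.rpow_sub_one hy.ne']; ring_nf
          _ ≤ C * ((x / X) ^ (-(a - ε)) * y ^ (-(2:ℝ))) := by
              gcongr C * (?_ * _)
              exact Real.rpow_le_rpow_of_nonpos (by positivity) hyx.le (by linarith)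
          _ = _ := by rw [hT]; ring
      calc _ ≤ (U (x / y) + F * y ^ A) * (H y / y) := by
            gcongr
            refine (abs_sub _ _).trans ?_
            rw [abs_of_nonneg hUxy, abs_of_nonneg (by positivity)]
        _ = F * y ^ A * (H y / y) + U (x / y) * (H y / y) := by ring
        _ ≤ C₂ * R * (y ^ A * Real.exp (2 * ε * |Real.log y|)) * (H y / y) +
            U (x / y) * (T * y ^ (-(2:ℝ))) := by
            refine add_le_add (mul_le_mul_of_nonneg_right (p2 hc) (by positivity)) ?_
            gcongr
        _ = _ := by rw [e2]; ring
  have hdomint : IntegrableOn (fun y => C₂ * R * (y ^ (A - 1) * Real.exp (2 * ε * |Real.log y|) * H y) +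
        T * (U (x / y) * y ^ (-(2:ℝ)))) (Set.Ioi 0) :=
    (hK.const_mul _).add (hc1.const_mul _)
  have hkey' := (ae_restrict_iff' (μ := volume) measurableSet_Ioi).2 (ae_of_all _ key)
  have hmeas : Measurable (fun y => U (x / y) * H y / y - F * (y ^ (A - 1) * H y)) := by
    have : Measurable fun y : ℝ => U (x / y) := hU_meas.comp (measurable_const.div measurable_id)
    fun_prop
  have hdiff : IntegrableOn (fun y => U (x / y) * H y / y - F * (y ^ (A - 1) * H y)) (Set.Ioi 0) :=
    hdomint.mono' hmeas.aestronglyMeasurable hkey'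
  have hFm : IntegrableOn (fun y => F * (y ^ (A - 1) * H y)) (Set.Ioi 0) := hm.const_mul F
  have hUH : IntegrableOn (fun y => U (x / y) * H y / y) (Set.Ioi 0) := by
    refine (hdiff.add hFm).congr_fun (fun y _ => ?_) measurableSet_Ioi
    simp
  have heq : mellinConv U H x - (∫ y in Set.Ioi (0:ℝ), y ^ (A - 1) * H y) * F
      = ∫ y in Set.Ioi (0:ℝ), (U (x / y) * H y / y - F * (y ^ (A - 1) * H y)) := by
    rw [integral_sub hUH hFm, integral_const_mul, mellinConv, mul_comm]
  rw [heq]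
  have hnorm := norm_integral_le_of_norm_le hdomint hkey'
  rw [integral_add (hK.const_mul _) (hc1.const_mul _), integral_const_mul, integral_const_mul, hc2,
    ← hJ, ← hI] at hnorm
  -- the remainder
  have hrem : T * (x⁻¹ * I) ≤ C₄ * R := by
    have w := weight_ge A₂ (κ + (-(1:ℝ)/2)) hL hbig
    rw [weight_eq A₂ _ hL, ← weight_eq' A₂ _ hL] at w
    have hRe : R = B * x ^ (-A) *
        (Real.exp (A₂ * Real.sqrt (Real.log x)) * (Real.log x) ^ κ * (Real.log x) ^ (-(1:ℝ)/2)) := by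
      rw [hR, hF, fmod]; ring
    have hxe : Real.exp (-(ε * Real.log x)) = x ^ (-ε) := by
      rw [Real.rpow_def_of_pos hx0]; ring_nf
    rw [hxe] at w
    have hTe : T * (x⁻¹ * I) = C * X ^ (a - ε) * I * x ^ (-(a - ε) - 1) := by
      rw [hT, Real.div_rpow hx0.le hX0.le, Real.rpow_neg hX0.le, Real.rpow_sub_one hx0.ne']
      field_simp
    rw [hTe]
    calc C * X ^ (a - ε) * I * x ^ (-(a - ε) - 1)
        ≤ C * X ^ (a - ε) * I * x ^ (-A + -ε) := by
          gcongr 1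
          exact Real.rpow_le_rpow_of_exponent_le (by linarith) (by linarith)
      _ = C₄ * (B * x ^ (-A) * (Real.exp A₂ * x ^ (-ε))) := by
          rw [Real.rpow_add hx0, hC₄]; field_simp
      _ ≤ C₄ * R := by
          rw [hRe]; gcongr
  rw [Real.norm_eq_abs R, abs_of_pos hR0]
  calc _ ≤ _ := hnorm
    _ ≤ C₂ * R * J + C₄ * R := by gcongr
    _ = _ := by ring

/-- Theorem: density asymptotics at infinity when the Heston part
dominates, `1 + η₁ > A₃`.  Let `U` be a probability density on `(0,∞)` with the
Heston-type asymptotics at infinity and zero, and let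
`D(x) = e^{−λt} U(x) + (U ⋆_M H(t,·))(x)`.  Then the moment `m_{A₃−1}(H(t,·))` is
finite and
`D(x) = [e^{−λt} + m_{A₃−1}(H(t,·))] B₁ x^{−A₃} exp{A₂√(log x)} (log x)^κ`
`· (1 + O((log x)^{−1/2}))` as `x → ∞`. -/
theorem density_asymptotics_heston_dominates_at_infinity
    (t lam η₁ η₂ p q : ℝ) (U : ℝ → ℝ) (B₁ Bt₁ A₂ At₂ A₃ At₃ κ : ℝ)
    (ht : 0 < t) (hlam : 0 < lam) (hη₁ : 1 < η₁) (hη₂ : 0 < η₂)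
    (hp : 0 < p) (hq : 0 < q) (hpq : p + q = 1)
    (hB₁ : 0 < B₁) (hBt₁ : 0 < Bt₁) (hA₃ : 2 < A₃) (hAt₃ : -1 < At₃)
    (hdom : A₃ < 1 + η₁)
    (hU_meas : Measurable U) (hU_nonneg : ∀ x, 0 ≤ U x)
    (hU_prob : (∫ x in Set.Ioi (0:ℝ), U x) = 1)
    -- `U(x) = B₁ x^{−A₃} exp{A₂√(log x)} (log x)^κ (1 + O((log x)^{−1/2}))` as `x → ∞`
    (hU_infty : (fun x => U x -
        B₁ * x ^ (-A₃) * Real.exp (A₂ * Real.sqrt (Real.log x)) * (Real.log x) ^ κ)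
      =O[atTop] (fun x =>
        B₁ * x ^ (-A₃) * Real.exp (A₂ * Real.sqrt (Real.log x)) * (Real.log x) ^ κ *
          (Real.log x) ^ (-(1:ℝ)/2)))
    -- `U(x) = B̃₁ x^{Ã₃} exp{Ã₂√(log(1/x))} (log(1/x))^κ (1 + O((log(1/x))^{−1/2}))` as `x → 0`
    (hU_zero : (fun x => U x -
        Bt₁ * x ^ At₃ * Real.exp (At₂ * Real.sqrt (Real.log x⁻¹)) * (Real.log x⁻¹) ^ κ)
      =O[nhdsWithin 0 (Set.Ioi 0)] (fun x =>
        Bt₁ * x ^ At₃ * Real.exp (At₂ * Real.sqrt (Real.log x⁻¹)) * (Real.log x⁻¹) ^ κ *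
          (Real.log x⁻¹) ^ (-(1:ℝ)/2))) :
    MeasureTheory.IntegrableOn
      (fun x => x ^ (A₃ - 1) * Hfun lam t η₁ η₂ p q x) (Set.Ioi 0) ∧
    (fun x => (Real.exp (-(lam * t)) * U x +
        mellinConv U (Hfun lam t η₁ η₂ p q) x) -
        (Real.exp (-(lam * t)) +
            ∫ y in Set.Ioi (0:ℝ), y ^ (A₃ - 1) * Hfun lam t η₁ η₂ p q y) *
          B₁ * x ^ (-A₃) * Real.exp (A₂ * Real.sqrt (Real.log x)) * (Real.log x) ^ κ)
      =O[atTop]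
      (fun x =>
        (Real.exp (-(lam * t)) +
            ∫ y in Set.Ioi (0:ℝ), y ^ (A₃ - 1) * Hfun lam t η₁ η₂ p q y) *
          B₁ * x ^ (-A₃) * Real.exp (A₂ * Real.sqrt (Real.log x)) * (Real.log x) ^ κ *
          (Real.log x) ^ (-(1:ℝ)/2)) := by
  have hη₁0 : 0 < η₁ := by linarith
  set ε := min (1 + η₁ - A₃) 1 / 4 with hεdef
  have hε : 0 < ε := by
    have : 0 < min (1 + η₁ - A₃) 1 := lt_min (by linarith) one_pos
    positivity
  have hε1 : 4 * ε ≤ 1 + η₁ - A₃ := by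
    have := min_le_left (1 + η₁ - A₃) 1
    rw [hεdef]; linarith
  have hε2 : 4 * ε ≤ 1 := by
    have := min_le_right (1 + η₁ - A₃) 1
    rw [hεdef]; linarith
  have hH := Hfun_measurable ht hlam hη₁0 hη₂ hp hq hpq
  have hH0 : ∀ y, 0 < y → 0 ≤ Hfun lam t η₁ η₂ p q y :=
    fun y hy => Hfun_nonneg ht hlam hη₁0 hη₂ hp hq hy
  obtain ⟨C, hC, h1, h2⟩ := Hfun_le ht hlam hη₁0 hη₂ hp hq hpq hε
  have hK := K_integrable (A := A₃) hH hH0 h1 h2 (by linarith) (by linarith)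
  have hm : IntegrableOn (fun x => x ^ (A₃ - 1) * Hfun lam t η₁ η₂ p q x) (Set.Ioi 0) := by
    refine hK.mono' (by fun_prop) ?_
    filter_upwards [ae_restrict_mem measurableSet_Ioi] with y hy
    have hy : 0 < y := hy
    have hHy := hH0 y hy
    have hE : 1 ≤ Real.exp (2 * ε * |Real.log y|) := Real.one_le_exp (by positivity)
    rw [Real.norm_eq_abs, abs_of_nonneg (by positivity)]
    gcongr
    exact le_mul_of_one_le_right (by positivity) hE
  refine ⟨hm, ?_⟩
  have hUi : IntegrableOn U (Set.Ioi 0) := by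
    by_contra h
    rw [integral_undef h] at hU_prob
    exact zero_ne_one hU_prob
  have hU' : (fun x => U x - fmod B₁ A₃ A₂ κ x) =O[atTop]
      (fun x => fmod B₁ A₃ A₂ κ x * (Real.log x) ^ (-(1:ℝ)/2)) := hU_infty
  have hconv := conv_main hB₁ hε hC hU_meas hU_nonneg hUi hH hH0 h1 hK hm
    (by linarith) (by linarith) hU'
  set m := ∫ y in Set.Ioi (0:ℝ), y ^ (A₃ - 1) * Hfun lam t η₁ η₂ p q y with hmdef
  have hm0 : 0 ≤ m := setIntegral_nonneg measurableSet_Ioi fun y hy =>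
    mul_nonneg (Real.rpow_nonneg (le_of_lt hy) _) (hH0 y hy)
  have hc : Real.exp (-(lam * t)) + m ≠ 0 := by
    have := Real.exp_pos (-(lam * t))
    positivity
  have hsum := (hU'.const_mul_left (Real.exp (-(lam * t)))).add hconv
  have hfin := (isBigO_const_mul_right_iff hc).2 hsum
  refine (hfin.congr' ?_ ?_)
  · refine Eventually.of_forall fun x => ?_
    simp only [fmod]; ring
  · refine Eventually.of_forall fun x => ?_
    simp only [fmod]; ring
end

section
/- Let t > 0, λ > 0, η₁ > 1, η₂ > 0, p, q > 0 with p + q = 1, and let U be a probability density on (0,∞) such that U(x) = B₁·x^{−A₃}·exp{A₂·√(log x)}·(log x)^{κ}·(1 + O((log x)^{−1/2})) as x → ∞ and U(x) = B̃₁·x^{Ã₃}·exp{Ã₂·√(log(1/x))}·(log(1/x))^{κ}·(1 + O((log(1/x))^{−1/2})) as x → 0, where B₁, B̃₁ > 0, A₂, Ã₂ ∈ ℝ, κ ∈ ℝ, A₃ > 2, and −1 < Ã₃ < η₂ − 1. Define D(x) = e^{−λt}·U(x) + (U ⋆_M H(t,·))(x) for x > 0. Then D(x) = [e^{−λt} +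 m_{−Ã₃−1}(H(t,·))]·B̃₁·x^{Ã₃}·exp{Ã₂·√(log(1/x))}·(log(1/x))^{κ}·(1 + O((log(1/x))^{−1/2})) as x → 0, where m_{−Ã₃−1}(H(t,·)) = ∫_0^∞ x^{−Ã₃−1} H(t,x) dx < ∞. -/
open Filter Asymptotics MeasureTheory

lemma aux_choose_bound (n k : ℕ) (f : ℕ → ℝ) (g : ℕ → ℕ) (hf0 : ∀ i, 0 ≤ f i) (hf1 : ∀ i, f i ≤ 1) :
    0 ≤ ∑ i ∈ Finset.Ico k n, ((n - k - 1).choose (g i) : ℝ) * (n.choose i : ℝ) * f i ∧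
    ∑ i ∈ Finset.Ico k n, ((n - k - 1).choose (g i) : ℝ) * (n.choose i : ℝ) * f i ≤ 4 ^ n := by
  constructor
  · exact Finset.sum_nonneg fun i _ => by have := hf0 i; positivity
  · calc _ ≤ ∑ i ∈ Finset.Ico k n, (2:ℝ) ^ n * (n.choose i : ℝ) := by
          refine Finset.sum_le_sum fun i _ => ?_
          have h1 : ((n - k - 1).choose (g i) : ℝ) ≤ 2 ^ n := by
            have h2 : (n - k - 1).choose (g i) ≤ 2 ^ (n - k - 1) := Nat.choose_le_two_pow _ _
            have h3 : 2 ^ (n - k - 1) ≤ 2 ^ n := Nat.pow_le_pow_right (by norm_num) (by omega)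
            exact_mod_cast h2.trans h3
          calc _ ≤ ((n - k - 1).choose (g i) : ℝ) * (n.choose i : ℝ) * 1 :=
                mul_le_mul_of_nonneg_left (hf1 i) (by positivity)
            _ ≤ _ := by rw [mul_one]; gcongr
      _ ≤ ∑ i ∈ Finset.range (n+1), (2:ℝ) ^ n * (n.choose i : ℝ) := by
          refine Finset.sum_le_sum_of_subset_of_nonneg ?_ fun i _ _ => by positivity
          intro i; simp only [Finset.mem_Ico, Finset.mem_range]; omega
      _ = 4 ^ n := by
          rw [← Finset.mul_sum]
          have : (∑ i ∈ Finset.range (n+1), (n.choose i : ℝ)) = 2 ^ n := by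
            exact_mod_cast Nat.sum_range_choose n
          rw [this, ← mul_pow]; norm_num

lemma aux_four (a b c d : ℝ) (i j k l : ℕ) (ha : 0 ≤ a) (hb : 0 ≤ b) (hc : 0 ≤ c) (hd : 0 ≤ d)
    (ha1 : a ≤ 1) (hb1 : b ≤ 1) (hc1 : c ≤ 1) (hd1 : d ≤ 1) :
    0 ≤ a ^ i * b ^ j * c ^ k * d ^ l ∧ a ^ i * b ^ j * c ^ k * d ^ l ≤ 1 := by
  refine ⟨by positivity, ?_⟩
  exact mul_le_one₀ (mul_le_one₀ (mul_le_one₀ (pow_le_one₀ ha ha1) (by positivity)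
    (pow_le_one₀ hb hb1)) (by positivity) (pow_le_one₀ hc hc1)) (by positivity) (pow_le_one₀ hd hd1)

lemma Pcoef_bound (η₁ η₂ p q : ℝ) (hη₁ : 0 < η₁) (hη₂ : 0 < η₂) (hp : 0 < p) (hq : 0 < q)
    (hpq : p + q = 1) (n k : ℕ) : 0 ≤ Pcoef η₁ η₂ p q n k ∧ Pcoef η₁ η₂ p q n k ≤ 4 ^ n := by
  unfold Pcoef
  split_ifs with h
  · exact ⟨by positivity, (pow_le_one₀ hp.le (by linarith)).trans (one_le_pow₀ (by norm_num))⟩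
  · have h1 : η₁ / (η₁ + η₂) ≤ 1 := by rw [div_le_one (by positivity)]; linarith
    have h2 : η₂ / (η₁ + η₂) ≤ 1 := by rw [div_le_one (by positivity)]; linarith
    have key := fun i => aux_four (η₁ / (η₁ + η₂)) (η₂ / (η₁ + η₂)) p q (i-k) (n-i) i (n-i)
      (by positivity) (by positivity) hp.le hq.le h1 h2 (by linarith) (by linarith)
    have := aux_choose_bound n k _ (fun i => i - k) (fun i => (key i).1) (fun i => (key i).2)
    simpa only [mul_assoc] using this

lemma Qcoef_bound (η₁ η₂ p q : ℝ) (hη₁ : 0 < η₁) (hη₂ : 0 < η₂) (hp : 0 < p) (hq : 0 < q)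
    (hpq : p + q = 1) (n k : ℕ) : 0 ≤ Qcoef η₁ η₂ p q n k ∧ Qcoef η₁ η₂ p q n k ≤ 4 ^ n := by
  unfold Qcoef
  split_ifs with h
  · exact ⟨by positivity, (pow_le_one₀ hq.le (by linarith)).trans (one_le_pow₀ (by norm_num))⟩
  · have h1 : η₁ / (η₁ + η₂) ≤ 1 := by rw [div_le_one (by positivity)]; linarith
    have h2 : η₂ / (η₁ + η₂) ≤ 1 := by rw [div_le_one (by positivity)]; linarith
    have key := fun i => aux_four (η₁ / (η₁ + η₂)) (η₂ / (η₁ + η₂)) p q (n-i) (i-k) (n-i) i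
      (by positivity) (by positivity) hp.le hq.le h1 h2 (by linarith) (by linarith)
    have := aux_choose_bound n k _ (fun i => i - k) (fun i => (key i).1) (fun i => (key i).2)
    simpa only [mul_assoc] using this

/-- The tail sums decay faster than any geometric sequence. -/
lemma aux_tail (z : ℝ) (hz : 0 < z) (lam t : ℝ) (hlt : z = lam * t) (R : ℕ → ℕ → ℝ)
    (hR : ∀ n k, 0 ≤ R n k ∧ R n k ≤ 4 ^ n) (r : ℝ) (hr : 0 < r) (hr1 : r ≤ 1) (k : ℕ) :
    0 ≤ ∑' m : ℕ, poisCoef lam t (m + (k + 1)) * R (m + (k + 1)) (k + 1) ∧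
    ∑' m : ℕ, poisCoef lam t (m + (k + 1)) * R (m + (k + 1)) (k + 1) ≤ r ^ k * Real.exp (4 * z / r) := by
  have hpn : ∀ n, 0 ≤ poisCoef lam t n := fun n => by
    unfold poisCoef; rw [← hlt]; positivity
  have h0 : ∀ m : ℕ, 0 ≤ poisCoef lam t (m + (k + 1)) * R (m + (k + 1)) (k + 1) := fun m =>
    mul_nonneg (hpn _) (hR _ _).1
  refine ⟨tsum_nonneg h0, ?_⟩
  have hs := Real.summable_pow_div_factorial (4 * z / r)
  have hs' := (summable_nat_add_iff (k+1)).2 hs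
  have hb : ∀ m : ℕ, poisCoef lam t (m + (k + 1)) * R (m + (k + 1)) (k + 1) ≤
      r ^ k * ((4 * z / r) ^ (m + (k+1)) / ((m + (k+1)).factorial : ℝ)) := by
    intro m
    set n := m + (k+1) with hn
    calc poisCoef lam t n * R n (k + 1) ≤ poisCoef lam t n * 4 ^ n :=
          mul_le_mul_of_nonneg_left (hR _ _).2 (hpn _)
      _ = Real.exp (-z) * (r ^ n * ((4 * z / r) ^ n / (n.factorial : ℝ))) := by
          unfold poisCoef; rw [← hlt, div_pow, mul_pow]; field_simp
      _ ≤ 1 * (r ^ k * ((4 * z / r) ^ n / (n.factorial : ℝ))) := by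
          gcongr ?_ * (?_ * _)
          · exact Real.exp_le_one_iff.2 (by linarith)
          · exact pow_le_pow_of_le_one hr.le hr1 (by omega)
      _ = _ := one_mul _
  calc _ ≤ ∑' m : ℕ, r ^ k * ((4 * z / r) ^ (m + (k+1)) / ((m + (k+1)).factorial : ℝ)) :=
        Summable.tsum_le_tsum hb (Summable.of_nonneg_of_le h0 hb (hs'.mul_left _)) (hs'.mul_left _)
    _ = r ^ k * ∑' m : ℕ, ((4 * z / r) ^ (m + (k+1)) / ((m + (k+1)).factorial : ℝ)) := tsum_mul_left
    _ ≤ r ^ k * ∑' m : ℕ, ((4 * z / r) ^ m / (m.factorial : ℝ)) := by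
        refine mul_le_mul_of_nonneg_left ?_ (by positivity)
        have := hs.sum_add_tsum_nat_add (k+1)
        have h2 : 0 ≤ ∑ i ∈ Finset.range (k+1), ((4 * z / r) ^ i / (i.factorial : ℝ)) :=
          Finset.sum_nonneg fun i _ => by positivity
        linarith
    _ = _ := by rw [Real.exp_eq_exp_ℝ, NormedSpace.exp_eq_tsum_div]

lemma aux_series (lam t η : ℝ) (hz : 0 < lam * t) (hη : 0 < η) (R : ℕ → ℕ → ℝ)
    (hR : ∀ n k, 0 ≤ R n k ∧ R n k ≤ 4 ^ n) (g : ℝ → ℝ)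
    (hg : ∀ u, g u = ∑' k : ℕ, (η ^ (k + 1) / (k.factorial : ℝ) *
      ∑' m : ℕ, poisCoef lam t (m + (k + 1)) * R (m + (k + 1)) (k + 1)) * u ^ k) :
    Measurable g ∧ (∀ u, 0 ≤ u → 0 ≤ g u) ∧
    ∀ ε > 0, ∃ C, 0 ≤ C ∧ ∀ u, 0 ≤ u → g u ≤ C * Real.exp (ε * u) := by
  set S : ℕ → ℝ := fun k => ∑' m : ℕ, poisCoef lam t (m + (k + 1)) * R (m + (k + 1)) (k + 1) with hS
  have hS0 : ∀ k, 0 ≤ S k := fun k => (aux_tail _ hz lam t rfl R hR 1 one_pos le_rfl k).1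
  have hc0 : ∀ k, 0 ≤ η ^ (k + 1) / (k.factorial : ℝ) * S k := fun k => by
    have := hS0 k; positivity
  have hb : ∀ r, 0 < r → r ≤ 1 → ∀ u, 0 ≤ u → ∀ k : ℕ, (η ^ (k + 1) / (k.factorial : ℝ) * S k) * u ^ k ≤
      (η * Real.exp (4 * (lam * t) / r)) * ((η * r * u) ^ k / (k.factorial : ℝ)) := by
    intro r hr hr1 u hu k
    calc (η ^ (k + 1) / (k.factorial : ℝ) * S k) * u ^ k
        ≤ (η ^ (k + 1) / (k.factorial : ℝ) * (r ^ k * Real.exp (4 * (lam * t) / r))) * u ^ k := by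
          gcongr
          exact (aux_tail _ hz lam t rfl R hR r hr hr1 k).2
      _ = _ := by rw [mul_pow, mul_pow, pow_succ]; ring
  have hsum : ∀ u, Summable fun k : ℕ => (η ^ (k + 1) / (k.factorial : ℝ) * S k) * u ^ k := by
    intro u
    apply Summable.of_norm
    have := (Real.summable_pow_div_factorial (η * 1 * |u|)).mul_left (η * Real.exp (4 * (lam * t) / 1))
    refine Summable.of_nonneg_of_le (fun _ => norm_nonneg _) (fun k => ?_) this
    rw [norm_mul, norm_pow, Real.norm_eq_abs, Real.norm_eq_abs, abs_of_nonneg (hc0 k)]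
    exact hb 1 one_pos le_rfl |u| (abs_nonneg u) k
  refine ⟨?_, ?_, ?_⟩
  · refine measurable_of_tendsto_metrizable
      (f := fun n u => ∑ k ∈ Finset.range n, (η ^ (k + 1) / (k.factorial : ℝ) * S k) * u ^ k)
      (fun n => by fun_prop) ?_
    rw [tendsto_pi_nhds]
    intro u
    rw [hg u]
    exact (hsum u).hasSum.tendsto_sum_nat
  · intro u hu
    rw [hg u]
    exact tsum_nonneg fun k => mul_nonneg (hc0 k) (by positivity)
  · intro ε hε
    set r := min 1 (ε / η) with hr
    have hr0 : 0 < r := by positivity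
    refine ⟨η * Real.exp (4 * (lam * t) / r), by positivity, fun u hu => ?_⟩
    have hs := (Real.summable_pow_div_factorial (η * r * u))
    rw [hg u]
    calc _ ≤ ∑' k : ℕ, (η * Real.exp (4 * (lam * t) / r)) * ((η * r * u) ^ k / (k.factorial : ℝ)) :=
          Summable.tsum_le_tsum (hb r hr0 (min_le_left _ _) u hu) (hsum u) (hs.mul_left _)
      _ = (η * Real.exp (4 * (lam * t) / r)) * Real.exp (η * r * u) := by
          rw [tsum_mul_left, Real.exp_eq_exp_ℝ, NormedSpace.exp_eq_tsum_div]
      _ ≤ _ := by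
          gcongr
          have : r ≤ ε / η := min_le_right _ _
          rwa [le_div_iff₀ hη, mul_comm] at this

lemma Hfun_props (lam t η₁ η₂ p q : ℝ) (hz : 0 < lam * t) (hη₁ : 0 < η₁) (hη₂ : 0 < η₂)
    (hp : 0 < p) (hq : 0 < q) (hpq : p + q = 1) :
    Measurable (Hfun lam t η₁ η₂ p q) ∧ (∀ y, 0 < y → 0 ≤ Hfun lam t η₁ η₂ p q y) ∧
    ∀ ε > 0, ∃ C, 0 ≤ C ∧ (∀ y, 0 < y → y ≤ 1 → Hfun lam t η₁ η₂ p q y ≤ C * y ^ (η₂ - 1 - ε)) ∧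
      (∀ y, 1 < y → Hfun lam t η₁ η₂ p q y ≤ C * y ^ (-η₁ - 1 + ε)) := by
  obtain ⟨m1, n1, b1⟩ := aux_series lam t η₁ hz hη₁ (Pcoef η₁ η₂ p q)
    (Pcoef_bound η₁ η₂ p q hη₁ hη₂ hp hq hpq) (G1 lam t η₁ η₂ p q) (fun u => rfl)
  obtain ⟨m2, n2, b2⟩ := aux_series lam t η₂ hz hη₂ (Qcoef η₁ η₂ p q)
    (Qcoef_bound η₁ η₂ p q hη₁ hη₂ hp hq hpq) (G2m lam t η₁ η₂ p q) (fun u => rfl)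
  refine ⟨?_, ?_, ?_⟩
  · unfold Hfun H1fun H2fun
    refine Measurable.ite measurableSet_Ioi ?_ ?_
    · exact (m1.comp Real.measurable_log).mul (by fun_prop)
    · exact (m2.comp (Real.measurable_log.comp measurable_inv)).mul (by fun_prop)
  · intro y hy
    unfold Hfun H1fun H2fun
    split_ifs with h
    · exact mul_nonneg (n1 _ (Real.log_nonneg h.le)) (by positivity)
    · exact mul_nonneg (n2 _ (Real.log_nonneg ((one_le_inv₀ hy).2 (not_lt.1 h)))) (by positivity)
  · intro ε hε
    obtain ⟨C1, hC1, h1⟩ := b1 ε hε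
    obtain ⟨C2, hC2, h2⟩ := b2 ε hε
    refine ⟨max C1 C2, by positivity, ?_, ?_⟩
    · intro y hy hy1
      unfold Hfun H2fun
      rw [if_neg (not_lt.2 hy1)]
      calc _ ≤ (C2 * Real.exp (ε * Real.log y⁻¹)) * y ^ (η₂ - 1) := by
            gcongr; exact h2 _ (Real.log_nonneg ((one_le_inv₀ hy).2 hy1))
        _ = C2 * y ^ (η₂ - 1 - ε) := by
            rw [mul_assoc, Real.rpow_def_of_pos hy, Real.rpow_def_of_pos hy, ← Real.exp_add, Real.log_inv]
            ring_nf
        _ ≤ _ := by gcongr; exact le_max_right _ _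
    · intro y hy1
      have hy : 0 < y := by linarith
      unfold Hfun H1fun
      rw [if_pos hy1]
      calc _ ≤ (C1 * Real.exp (ε * Real.log y)) * y ^ (-η₁ - 1) := by
            gcongr; exact h1 _ (Real.log_nonneg hy1.le)
        _ = C1 * y ^ (-η₁ - 1 + ε) := by
            rw [mul_assoc, Real.rpow_def_of_pos hy, Real.rpow_def_of_pos hy, ← Real.exp_add]
            ring_nf
        _ ≤ _ := by gcongr; exact le_max_left _ _

lemma aux_phi (A κ ε : ℝ) (hε : 0 < ε) : ∃ M₀ K, 1 ≤ M₀ ∧ 0 ≤ K ∧ ∀ N, M₀ ≤ N → ∀ L M, N ≤ L → N ≤ M →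
    Real.exp (A * Real.sqrt M) * M ^ κ ≤ Real.exp (A * Real.sqrt L) * L ^ κ * Real.exp (ε * |M - L|) ∧
    |Real.exp (A * Real.sqrt M) * M ^ κ - Real.exp (A * Real.sqrt L) * L ^ κ| ≤
      K * (Real.exp (A * Real.sqrt L) * L ^ κ * L ^ (-(1:ℝ)/2)) * Real.exp (ε * |M - L|) := by
  set C := |A| + 2 * |κ| with hC
  have hC0 : 0 ≤ C := by positivity
  refine ⟨max 1 ((2 * C / ε) ^ 2), C * (2 / ε), le_max_left _ _, by positivity, ?_⟩
  intro N hN L M hL hM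
  have hN1 : 1 ≤ N := (le_max_left _ _).trans hN
  have hL1 : 1 ≤ L := hN1.trans hL
  have hM1 : 1 ≤ M := hN1.trans hM
  have hL0 : 0 < L := by linarith
  have hM0 : 0 < M := by linarith
  set a := Real.sqrt L with ha
  set b := Real.sqrt M with hb
  have ha1 : 1 ≤ a := by rw [ha]; exact Real.one_le_sqrt.2 hL1
  have hb1 : 1 ≤ b := by rw [hb]; exact Real.one_le_sqrt.2 hM1
  have haC : 2 * C / ε ≤ a := Real.le_sqrt_of_sq_le (((le_max_right _ _).trans hN).trans hL)
  have haa : a ^ 2 = L := Real.sq_sqrt hL0.le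
  have hbb : b ^ 2 = M := Real.sq_sqrt hM0.le
  set s := |M - L| with hs
  have hs0 : 0 ≤ s := abs_nonneg _
  have h1 : |b - a| ≤ s / a := by
    rw [le_div_iff₀ (by linarith), hs, ← haa, ← hbb,
      show b ^ 2 - a ^ 2 = (b - a) * (b + a) by ring, abs_mul, abs_of_pos (show 0 < b + a by linarith)]
    exact mul_le_mul_of_nonneg_left (by linarith) (abs_nonneg _)
  have hlog : ∀ x y : ℝ, 1 ≤ x → 1 ≤ y → Real.log x - Real.log y ≤ |x - y| := by
    intro x y hx hy
    rw [← Real.log_div (by linarith) (by linarith)]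
    have := Real.log_le_sub_one_of_pos (show 0 < x / y by positivity)
    refine this.trans ?_
    rw [show x / y - 1 = (x - y) / y by field_simp, div_le_iff₀ (by linarith)]
    nlinarith [le_abs_self (x - y), abs_nonneg (x - y)]
  have h2 : |Real.log M - Real.log L| ≤ 2 * (s / a) := by
    have e : Real.log M - Real.log L = 2 * (Real.log b - Real.log a) := by
      rw [← haa, ← hbb, Real.log_pow, Real.log_pow]; push_cast; ring
    rw [e, abs_mul, abs_of_pos (show (0:ℝ) < 2 by norm_num)]
    have : |Real.log b - Real.log a| ≤ |b - a| := by
      rw [abs_le]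
      constructor
      · have := hlog a b ha1 hb1
        rw [abs_sub_comm] at this; linarith
      · exact hlog b a hb1 ha1
    linarith
  set r := A * (b - a) + κ * (Real.log M - Real.log L) with hr
  have hr1 : |r| ≤ C * (s / a) := by
    calc |r| ≤ |A * (b - a)| + |κ * (Real.log M - Real.log L)| := abs_add_le _ _
      _ = |A| * |b - a| + |κ| * |Real.log M - Real.log L| := by rw [abs_mul, abs_mul]
      _ ≤ |A| * (s / a) + |κ| * (2 * (s / a)) := by gcongr
      _ = _ := by rw [hC]; ring
  have hr2 : |r| ≤ ε / 2 * s := by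
    refine hr1.trans ?_
    rw [div_le_iff₀ hε] at haC
    rw [← mul_div_assoc, div_le_iff₀ (by linarith)]
    nlinarith
  have hφ : Real.exp (A * b) * M ^ κ = Real.exp (A * a) * L ^ κ * Real.exp r := by
    rw [Real.rpow_def_of_pos hL0, Real.rpow_def_of_pos hM0, ← Real.exp_add, ← Real.exp_add, ← Real.exp_add, hr]
    ring_nf
  have hF : 0 < Real.exp (A * a) * L ^ κ := by positivity
  set F := Real.exp (A * a) * L ^ κ with hFd
  rw [hφ]
  constructor
  · gcongr
    calc r ≤ |r| := le_abs_self r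
      _ ≤ ε / 2 * s := hr2
      _ ≤ ε * s := by nlinarith
  · have hLa : L ^ (-(1:ℝ)/2) = 1 / a := by
      rw [ha, Real.sqrt_eq_rpow, neg_div, Real.rpow_neg hL0.le]; simp only [one_div]
    rw [hLa, show F * Real.exp r - F = F * (Real.exp r - 1) by ring, abs_mul, abs_of_pos hF]
    have h3 : |Real.exp r - 1| ≤ |r| * Real.exp |r| := by
      rw [abs_le]
      constructor
      · have := Real.add_one_le_exp r
        have h5 : 1 ≤ Real.exp |r| := Real.one_le_exp (abs_nonneg r)
        nlinarith [neg_abs_le r, abs_nonneg r]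
      · have h4 := Real.add_one_le_exp (-r)
        have h5 : Real.exp r * Real.exp (-r) = 1 := by rw [← Real.exp_add]; simp
        have h6 := Real.exp_pos r
        have h7 : Real.exp r ≤ Real.exp |r| := Real.exp_le_exp.2 (le_abs_self r)
        have h8 : Real.exp r - 1 ≤ r * Real.exp r := by nlinarith
        have h9 : r * Real.exp r ≤ |r| * Real.exp r :=
          mul_le_mul_of_nonneg_right (le_abs_self r) h6.le
        have h10 : |r| * Real.exp r ≤ |r| * Real.exp |r| := by gcongr
        linarith
    have h4 : s ≤ (2 / ε) * Real.exp (ε / 2 * s) := by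
      have := Real.add_one_le_exp (ε / 2 * s)
      calc s = (2 / ε) * (ε / 2 * s) := by field_simp
        _ ≤ _ := by gcongr; linarith
    calc F * |Real.exp r - 1| ≤ F * (|r| * Real.exp |r|) := by gcongr
      _ ≤ F * ((C * (s / a)) * Real.exp (ε / 2 * s)) := by gcongr
      _ = F * C * (1 / a) * Real.exp (ε / 2 * s) * s := by ring
      _ ≤ F * C * (1 / a) * Real.exp (ε / 2 * s) * ((2 / ε) * Real.exp (ε / 2 * s)) := by gcongr
      _ = C * (2 / ε) * (F * (1 / a)) * (Real.exp (ε / 2 * s) * Real.exp (ε / 2 * s)) := by ring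
      _ = _ := by rw [← Real.exp_add]; ring_nf

lemma aux_cov (f : ℝ → ℝ) (hf : IntegrableOn (fun z => f z / z) (Set.Ioi 0)) (x : ℝ) (hx : 0 < x) :
    IntegrableOn (fun y => f (x / y) / y) (Set.Ioi 0) ∧
    ∫ y in Set.Ioi (0:ℝ), f (x / y) / y = ∫ z in Set.Ioi (0:ℝ), f z / z := by
  set k : ℝ → ℝ := fun z => x * (f (x * z) / (x * z)) with hk
  have hki : IntegrableOn k (Set.Ioi 0) := by
    have := (integrableOn_Ioi_comp_mul_left_iff (fun z => f z / z) 0 hx).2 (by simpa using hf)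
    exact this.const_mul x
  have hkint : ∫ z in Set.Ioi (0:ℝ), k z = ∫ z in Set.Ioi (0:ℝ), f z / z := by
    have := integral_comp_mul_left_Ioi (fun z => f z / z) 0 hx
    rw [hk, integral_const_mul, this]
    simp only [mul_zero, smul_eq_mul]
    field_simp
  have e : ∀ y ∈ Set.Ioi (0:ℝ), (|(-1:ℝ)| * y ^ ((-1:ℝ) - 1)) • k (y ^ (-1:ℝ)) = f (x / y) / y := by
    intro y hy
    have hy : 0 < y := hy
    have h2 : y ^ ((-1:ℝ) - 1) = (y ^ 2)⁻¹ := by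
      rw [show (-1:ℝ) - 1 = -((2:ℕ):ℝ) by norm_num, Real.rpow_neg hy.le, Real.rpow_natCast]
    rw [h2, Real.rpow_neg_one, hk]
    simp only [abs_neg, abs_one, smul_eq_mul, ← div_eq_mul_inv]
    field_simp
  constructor
  · have := (integrableOn_Ioi_comp_rpow_iff k (show (-1:ℝ) ≠ 0 by norm_num)).2 hki
    exact this.congr_fun e measurableSet_Ioi
  · rw [← hkint, ← integral_comp_rpow_Ioi k (show (-1:ℝ) ≠ 0 by norm_num)]
    exact (setIntegral_congr_fun measurableSet_Ioi e).symm

lemma aux_intH (H : ℝ → ℝ) (η₁ η₂ : ℝ) (hm : Measurable H) (h0 : ∀ y, 0 < y → 0 ≤ H y)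
    (hb : ∀ ε > 0, ∃ C, 0 ≤ C ∧ (∀ y, 0 < y → y ≤ 1 → H y ≤ C * y ^ (η₂ - 1 - ε)) ∧
      (∀ y, 1 < y → H y ≤ C * y ^ (-η₁ - 1 + ε))) (s : ℝ) (hs1 : -η₂ < s) (hs2 : s < η₁) :
    IntegrableOn (fun y => y ^ s * H y) (Set.Ioi 0) := by
  have hmeas : Measurable fun y : ℝ => y ^ s * H y := by fun_prop
  rw [← Set.Ioc_union_Ioi_eq_Ioi (zero_le_one (α := ℝ))]
  refine IntegrableOn.union ?_ ?_
  · obtain ⟨C, hC, h1, -⟩ := hb ((s + η₂) / 2) (by linarith)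
    have hi : IntegrableOn (fun y : ℝ => C * y ^ (s + (η₂ - 1 - (s + η₂) / 2))) (Set.Ioc 0 1) := by
      refine Integrable.const_mul ?_ C
      exact (intervalIntegrable_iff_integrableOn_Ioc_of_le zero_le_one).1
        (intervalIntegral.intervalIntegrable_rpow' (by linarith))
    refine Integrable.mono' hi hmeas.aestronglyMeasurable ?_
    refine (ae_restrict_iff' measurableSet_Ioc).2 (Eventually.of_forall fun y hy => ?_)
    have hy0 := hy.1
    rw [Real.norm_of_nonneg (mul_nonneg (by positivity) (h0 y hy0)), Real.rpow_add hy0]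
    calc _ ≤ y ^ s * (C * y ^ (η₂ - 1 - (s + η₂) / 2)) := by gcongr; exact h1 y hy0 hy.2
      _ = _ := by ring
  · obtain ⟨C, hC, -, h1⟩ := hb ((η₁ - s) / 2) (by linarith)
    have hi : IntegrableOn (fun y : ℝ => C * y ^ (s + (-η₁ - 1 + (η₁ - s) / 2))) (Set.Ioi 1) :=
      Integrable.const_mul (integrableOn_Ioi_rpow_of_lt (by linarith) one_pos) C
    refine Integrable.mono' hi hmeas.aestronglyMeasurable ?_
    refine (ae_restrict_iff' measurableSet_Ioi).2 (Eventually.of_forall fun y hy => ?_)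
    have hy1 : 1 < y := hy
    have hy0 : 0 < y := by linarith
    rw [Real.norm_of_nonneg (mul_nonneg (by positivity) (h0 y hy0)), Real.rpow_add hy0]
    calc _ ≤ y ^ s * (C * y ^ (-η₁ - 1 + (η₁ - s) / 2)) := by gcongr; exact h1 y hy1
      _ = _ := by ring

/-- Pointwise comparison of `U (x / y)` with the leading term. -/
lemma aux_pointwise (U : ℝ → ℝ) (B A a κ ε : ℝ) (hB : 0 < B) (hε : 0 < ε) (hU0 : ∀ x, 0 ≤ U x)
    (hU : (fun x => U x -
        B * x ^ a * Real.exp (A * Real.sqrt (Real.log x⁻¹)) * (Real.log x⁻¹) ^ κ)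
      =O[nhdsWithin 0 (Set.Ioi 0)] (fun x =>
        B * x ^ a * Real.exp (A * Real.sqrt (Real.log x⁻¹)) * (Real.log x⁻¹) ^ κ *
          (Real.log x⁻¹) ^ (-(1:ℝ)/2))) :
    ∃ δ K K₃, 0 < δ ∧ δ < 1 ∧ 0 ≤ K ∧ 0 ≤ K₃ ∧ ∀ x, 0 < x → x ≤ δ →
      (∀ y, 0 < y →
        |U (x / y) - B * x ^ a * Real.exp (A * Real.sqrt (Real.log x⁻¹)) * (Real.log x⁻¹) ^ κ * y ^ (-a)|
        ≤ K * (B * x ^ a * Real.exp (A * Real.sqrt (Real.log x⁻¹)) * (Real.log x⁻¹) ^ κ *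
          (Real.log x⁻¹) ^ (-(1:ℝ)/2)) * (y ^ (-a) * (y ^ ε + y ^ (-ε)))
          + (if δ < x / y then U (x / y) else 0)) ∧
      x ^ (a + ε) ≤ K₃ * (B * x ^ a * Real.exp (A * Real.sqrt (Real.log x⁻¹)) * (Real.log x⁻¹) ^ κ *
          (Real.log x⁻¹) ^ (-(1:ℝ)/2)) := by
  obtain ⟨c, hc, hcU⟩ := hU.exists_nonneg
  rw [isBigOWith_iff, eventually_nhdsWithin_iff, Metric.eventually_nhds_iff] at hcU
  obtain ⟨δ₀, hδ₀, hcU⟩ := hcU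
  obtain ⟨M₁, K₁, hM₁, hK₁, hφ₁⟩ := aux_phi A κ ε hε
  obtain ⟨M₂, K₂, hM₂, hK₂, hφ₂⟩ := aux_phi A (κ + -(1:ℝ)/2) ε hε
  set N := max (max M₁ M₂) (Real.log δ₀⁻¹ + 1) with hN
  have hN1 : M₁ ≤ N := (le_max_left _ _).trans (le_max_left _ _)
  have hN2 : M₂ ≤ N := (le_max_right _ _).trans (le_max_left _ _)
  have hN3 : Real.log δ₀⁻¹ + 1 ≤ N := le_max_right _ _
  have hN0 : 1 ≤ N := hM₁.trans hN1
  have hδδ : Real.exp (-N) < δ₀ := by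
    rw [← Real.lt_log_iff_exp_lt hδ₀]; rw [Real.log_inv] at hN3; linarith
  have hiff : ∀ z, 0 < z → (z ≤ Real.exp (-N) ↔ N ≤ Real.log z⁻¹) := by
    intro z hz
    rw [← Real.log_le_iff_le_exp hz, Real.log_inv]; constructor <;> intro h <;> linarith
  set P : ℝ → ℝ := fun L => Real.exp (A * Real.sqrt L) * L ^ κ with hP
  set P2 : ℝ → ℝ := fun L => Real.exp (A * Real.sqrt L) * L ^ (κ + -(1:ℝ)/2) with hP2
  have hPP : ∀ L, 0 < L → P L * L ^ (-(1:ℝ)/2) = P2 L := by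
    intro L hL
    simp only [hP, hP2]; rw [Real.rpow_add hL]; ring
  have hU' : ∀ z, 0 < z → z ≤ Real.exp (-N) → |U z - B * z ^ a * P (Real.log z⁻¹)| ≤
      c * (B * z ^ a * P2 (Real.log z⁻¹)) := by
    intro z hz hzN
    have hL := (hiff z hz).1 hzN
    have hL0 : 0 < Real.log z⁻¹ := by linarith
    have := hcU (y := z) (by rw [Real.dist_eq, sub_zero, abs_of_pos hz]; linarith) hz
    rw [Real.norm_eq_abs, Real.norm_eq_abs] at this
    rw [← hPP _ hL0]
    refine le_trans (le_of_eq ?_) (this.trans (le_of_eq ?_))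
    · simp only [hP]; ring_nf
    · rw [abs_of_nonneg (by positivity)]; simp only [hP]; ring
  have hP2N : 0 < P2 N := by simp only [hP2]; positivity
  refine ⟨Real.exp (-N), c + K₁ + Real.exp (ε * N) / ε, 1 / (B * P2 N), Real.exp_pos _,
    by rw [← Real.exp_zero]; exact Real.exp_lt_exp.2 (by linarith), by positivity, by positivity, ?_⟩
  intro x hx hxN
  have hL := (hiff x hx).1 hxN
  set L := Real.log x⁻¹ with hLd
  have hL0 : 0 < L := by linarith
  have eV : B * x ^ a * Real.exp (A * Real.sqrt L) * L ^ κ = B * x ^ a * P L := by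
    simp only [hP]; ring
  have eV2 : B * x ^ a * P L * L ^ (-(1:ℝ)/2) = B * x ^ a * P2 L := by
    rw [mul_assoc, hPP L hL0]
  rw [eV, eV2]
  have hPL : 0 < P L := by simp only [hP]; positivity
  have hP2L : 0 < P2 L := by simp only [hP2]; positivity
  have hxa : 0 < x ^ a := by positivity
  constructor
  · intro y hy
    have hz : 0 < x / y := by positivity
    have hya : 0 < y ^ (-a) := by positivity
    have hM : Real.log (x / y)⁻¹ - L = Real.log y := by
      rw [hLd, Real.log_inv, Real.log_inv, Real.log_div hx.ne' hy.ne']; ring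
    have hw : Real.exp (ε * |Real.log y|) ≤ y ^ ε + y ^ (-ε) := by
      have h1 : 0 < y ^ ε := by positivity
      have h2 : 0 < y ^ (-ε) := by positivity
      rcases abs_cases (Real.log y) with ⟨h, -⟩ | ⟨h, -⟩
      · rw [h, Real.rpow_def_of_pos hy, mul_comm]; linarith
      · rw [h, Real.rpow_def_of_pos hy (-ε), show ε * -Real.log y = Real.log y * -ε by ring]; linarith
    set w := y ^ ε + y ^ (-ε) with hwd
    have hw0 : 0 < w := by positivity
    set T := B * x ^ a * P2 L * (y ^ (-a) * w) with hT
    have hT0 : 0 < T := by positivity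
    have hTs : (c + K₁ + Real.exp (ε * N) / ε) * (B * x ^ a * P2 L) * (y ^ (-a) * w)
      = c * T + K₁ * T + Real.exp (ε * N) / ε * T := by rw [hT]; ring
    rw [hTs]
    have hE0 : 0 ≤ Real.exp (ε * N) / ε * T := by positivity
    have hcT : 0 ≤ c * T := by positivity
    have hKT : 0 ≤ K₁ * T := by positivity
    have hzxa : (x / y) ^ a = x ^ a * y ^ (-a) := by
      rw [Real.div_rpow hx.le hy.le, Real.rpow_neg hy.le]; rfl
    split_ifs with hzN
    · have hML : Real.log (x / y)⁻¹ < N := by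
        by_contra h
        exact absurd ((hiff _ hz).2 (not_lt.1 h)) (not_le.2 hzN)
      have h1 : L ≤ N + |Real.log y| := by
        have := neg_abs_le (Real.log y); linarith
      have h2 : L ^ ((1:ℝ)/2) ≤ Real.exp (ε * N) / ε * w := by
        calc L ^ ((1:ℝ)/2) ≤ L ^ (1:ℝ) :=
              Real.rpow_le_rpow_of_exponent_le (by linarith) (by norm_num)
          _ = L := Real.rpow_one L
          _ = (ε * L) / ε := by field_simp
          _ ≤ Real.exp (ε * L) / ε := by
              gcongr; have := Real.add_one_le_exp (ε * L); linarith
          _ ≤ Real.exp (ε * N + ε * |Real.log y|) / ε := by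
              gcongr; rw [← mul_add]; gcongr
          _ = Real.exp (ε * N) / ε * Real.exp (ε * |Real.log y|) := by rw [Real.exp_add]; ring
          _ ≤ _ := by gcongr
      have h3 : P L = P2 L * L ^ ((1:ℝ)/2) := by
        rw [← hPP L hL0, mul_assoc, ← Real.rpow_add hL0]; norm_num
      have h4 : B * x ^ a * P L * y ^ (-a) ≤ Real.exp (ε * N) / ε * T := by
        rw [h3, hT]
        calc _ = B * x ^ a * P2 L * y ^ (-a) * L ^ ((1:ℝ)/2) := by ring
          _ ≤ B * x ^ a * P2 L * y ^ (-a) * (Real.exp (ε * N) / ε * w) := by gcongr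
          _ = _ := by ring
      have h5 : 0 ≤ B * x ^ a * P L * y ^ (-a) := by positivity
      have h6 := hU0 (x / y)
      rw [abs_le]; constructor <;> linarith
    · rw [not_lt] at hzN
      have hMN := (hiff _ hz).1 hzN
      have h1 := hU' _ hz hzN
      set M := Real.log (x / y)⁻¹ with hMd
      have h2 := (hφ₁ N hN1 L M hL hMN).2
      have h3 := (hφ₂ N hN2 L M hL hMN).1
      rw [hM] at h2 h3
      have h2' : |P M - P L| ≤ K₁ * P2 L * w := by
        rw [← hPP L hL0]
        refine h2.trans ?_
        gcongr
      have h3' : P2 M ≤ P2 L * w := by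
        refine h3.trans ?_
        gcongr
      rw [hzxa] at h1
      have h4 : c * (B * (x ^ a * y ^ (-a)) * P2 M) ≤ c * T := by
        rw [hT]
        calc _ ≤ c * (B * (x ^ a * y ^ (-a)) * (P2 L * w)) := by gcongr
          _ = _ := by ring
      have h5 : |B * (x ^ a * y ^ (-a)) * P M - B * x ^ a * P L * y ^ (-a)| ≤ K₁ * T := by
        rw [show B * (x ^ a * y ^ (-a)) * P M - B * x ^ a * P L * y ^ (-a) =
          (B * x ^ a * y ^ (-a)) * (P M - P L) by ring, abs_mul, abs_of_pos (by positivity)]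
        calc _ ≤ (B * x ^ a * y ^ (-a)) * (K₁ * P2 L * w) := by gcongr
          _ = _ := by rw [hT]; ring
      have h6 := abs_sub_le (U (x / y)) (B * (x ^ a * y ^ (-a)) * P M) (B * x ^ a * P L * y ^ (-a))
      linarith
  · have h1 : P2 N ≤ P2 L * Real.exp (ε * |N - L|) := (hφ₂ N hN2 L N hL le_rfl).1
    have h2 : x ^ ε = Real.exp (- (ε * L)) := by
      rw [Real.rpow_def_of_pos hx, hLd, Real.log_inv]; ring_nf
    have h3 : Real.exp (ε * |N - L|) ≤ Real.exp (ε * L) := by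
      rw [abs_sub_comm, abs_of_nonneg (by linarith)]
      gcongr; linarith
    have h4 : x ^ ε ≤ P2 L / P2 N := by
      rw [le_div_iff₀ hP2N, h2, Real.exp_neg, inv_mul_le_iff₀ (Real.exp_pos _)]
      calc _ ≤ P2 L * Real.exp (ε * |N - L|) := h1
        _ ≤ P2 L * Real.exp (ε * L) := by gcongr
        _ = _ := mul_comm _ _
    rw [Real.rpow_add hx]
    calc _ ≤ x ^ a * (P2 L / P2 N) := by gcongr
      _ = _ := by field_simp

lemma aux_core (U H : ℝ → ℝ) (B A a κ η₁ η₂ : ℝ) (hη₁ : 1 < η₁) (hB : 0 < B) (ha : -1 < a)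
    (hdom : a < η₂ - 1) (hUm : Measurable U) (hU0 : ∀ x, 0 ≤ U x)
    (hUi : IntegrableOn U (Set.Ioi 0))
    (hU : (fun x => U x -
        B * x ^ a * Real.exp (A * Real.sqrt (Real.log x⁻¹)) * (Real.log x⁻¹) ^ κ)
      =O[nhdsWithin 0 (Set.Ioi 0)] (fun x =>
        B * x ^ a * Real.exp (A * Real.sqrt (Real.log x⁻¹)) * (Real.log x⁻¹) ^ κ *
          (Real.log x⁻¹) ^ (-(1:ℝ)/2)))
    (hm : Measurable H) (h0 : ∀ y, 0 < y → 0 ≤ H y)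
    (hb : ∀ ε > 0, ∃ C, 0 ≤ C ∧ (∀ y, 0 < y → y ≤ 1 → H y ≤ C * y ^ (η₂ - 1 - ε)) ∧
      (∀ y, 1 < y → H y ≤ C * y ^ (-η₁ - 1 + ε))) :
    IntegrableOn (fun y => y ^ (-a - 1) * H y) (Set.Ioi 0) ∧
    (fun x => mellinConv U H x - (∫ y in Set.Ioi (0:ℝ), y ^ (-a - 1) * H y) *
        (B * x ^ a * Real.exp (A * Real.sqrt (Real.log x⁻¹)) * (Real.log x⁻¹) ^ κ))
      =O[nhdsWithin 0 (Set.Ioi 0)] (fun x =>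
        B * x ^ a * Real.exp (A * Real.sqrt (Real.log x⁻¹)) * (Real.log x⁻¹) ^ κ *
          (Real.log x⁻¹) ^ (-(1:ℝ)/2)) := by
  have hI : IntegrableOn (fun y => y ^ (-a - 1) * H y) (Set.Ioi 0) :=
    aux_intH H η₁ η₂ hm h0 hb _ (by linarith) (by linarith)
  refine ⟨hI, ?_⟩
  set ε := min ((η₂ - 1 - a) / 3) (1/3) with hεd
  have hε : 0 < ε := lt_min (by linarith) (by norm_num)
  have hε1 : ε ≤ (η₂ - 1 - a) / 3 := min_le_left _ _
  have hε2 : ε ≤ 1/3 := min_le_right _ _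
  have hJ1 := aux_intH H η₁ η₂ hm h0 hb (-a - 1 + ε) (by linarith) (by linarith)
  have hJ2 := aux_intH H η₁ η₂ hm h0 hb (-a - 1 - ε) (by linarith) (by linarith)
  have hJ : IntegrableOn (fun y => y ^ (-a - 1 + ε) * H y + y ^ (-a - 1 - ε) * H y) (Set.Ioi 0) :=
    hJ1.add hJ2
  set J := ∫ y in Set.Ioi (0:ℝ), (y ^ (-a - 1 + ε) * H y + y ^ (-a - 1 - ε) * H y) with hJd
  obtain ⟨C, hC, hC1, -⟩ := hb ε hε
  obtain ⟨δ, K, K₃, hδ, hδ1, hK, hK₃, hmain⟩ := aux_pointwise U B A a κ ε hB hε hU0 hU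
  set b := η₂ - 1 - ε with hbd
  set f : ℝ → ℝ := fun z => if δ < z then U z * z ^ (-b) else 0 with hfd
  have hfi : IntegrableOn (fun z => f z / z) (Set.Ioi 0) := by
    have hi : IntegrableOn (fun z => δ ^ (-b - 1) * U z) (Set.Ioi 0) := hUi.const_mul _
    have hmeas : Measurable fun z => f z / z := by
      refine Measurable.div ?_ measurable_id
      exact Measurable.ite measurableSet_Ioi (by fun_prop) measurable_const
    refine Integrable.mono' hi hmeas.aestronglyMeasurable ?_
    refine (ae_restrict_iff' measurableSet_Ioi).2 (Eventually.of_forall fun z hz => ?_)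
    have hz : 0 < z := hz
    simp only [hfd]
    split_ifs with h
    · have := hU0 z
      rw [Real.norm_of_nonneg (by positivity), mul_div_assoc, ← Real.rpow_sub_one hz.ne', mul_comm]
      gcongr ?_ * _
      exact Real.rpow_le_rpow_of_nonpos hδ h.le (by linarith)
    · have := hU0 z
      simp only [zero_div, norm_zero]; positivity
  set W := ∫ z in Set.Ioi (0:ℝ), f z / z with hWd
  have hW0 : 0 ≤ W := by
    refine setIntegral_nonneg measurableSet_Ioi fun z hz => ?_
    have hz : 0 < z := hz
    have := hU0 z
    simp only [hfd]; split_ifs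
    · positivity
    · simp
  refine IsBigO.of_bound (K * J + C * W * K₃) ?_
  have hev : ∀ᶠ x in nhdsWithin (0:ℝ) (Set.Ioi 0), x ∈ Set.Ioc 0 δ := Ioc_mem_nhdsGT hδ
  filter_upwards [hev] with x hx
  obtain ⟨hx0, hxδ⟩ := hx
  obtain ⟨hpt, hxb⟩ := hmain x hx0 hxδ
  have hL0 : 0 < Real.log x⁻¹ := Real.log_pos ((one_lt_inv₀ hx0).2 (by linarith))
  set V := B * x ^ a * Real.exp (A * Real.sqrt (Real.log x⁻¹)) * (Real.log x⁻¹) ^ κ with hV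
  set E := V * (Real.log x⁻¹) ^ (-(1:ℝ)/2) with hE
  have hV0 : 0 < V := by positivity
  have hE0 : 0 < E := by positivity
  obtain ⟨hci, hcint⟩ := aux_cov f hfi x hx0
  -- the error function and its majorant
  set D : ℝ → ℝ := fun y => U (x / y) * H y / y - V * (y ^ (-a - 1) * H y) with hD
  set G : ℝ → ℝ := fun y => K * E * (y ^ (-a - 1 + ε) * H y + y ^ (-a - 1 - ε) * H y) +
    C * x ^ b * (f (x / y) / y) with hG
  have hGi1 : IntegrableOn (fun y => K * E * (y ^ (-a - 1 + ε) * H y + y ^ (-a - 1 - ε) * H y))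
    (Set.Ioi 0) := hJ.const_mul _
  have hGi2 : IntegrableOn (fun y => C * x ^ b * (f (x / y) / y)) (Set.Ioi 0) := hci.const_mul _
  have hGi : IntegrableOn G (Set.Ioi 0) := hGi1.add hGi2
  have hGint : ∫ y in Set.Ioi (0:ℝ), G y = K * E * J + C * x ^ b * W := by
    rw [hG, integral_add hGi1 hGi2, integral_const_mul, integral_const_mul, hcint]
  have hDG : ∀ y, 0 < y → ‖D y‖ ≤ G y := by
    intro y hy
    have hH := h0 y hy
    have hyr : y ^ (-a - 1) = y ^ (-a) / y := Real.rpow_sub_one hy.ne' _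
    have e1 : D y = (U (x / y) - V * y ^ (-a)) * (H y / y) := by
      simp only [hD]; rw [hyr]; ring
    have hHy : 0 ≤ H y / y := by positivity
    rw [e1, norm_mul, Real.norm_of_nonneg hHy, Real.norm_eq_abs]
    refine (mul_le_mul_of_nonneg_right (hpt y hy) hHy).trans ?_
    rw [add_mul]
    simp only [hG]
    refine add_le_add (le_of_eq ?_) ?_
    · rw [show -a - 1 + ε = -a + ε - 1 by ring, show -a - 1 - ε = -a + -ε - 1 by ring,
        Real.rpow_sub_one hy.ne', Real.rpow_sub_one hy.ne', Real.rpow_add hy, Real.rpow_add hy]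
      ring
    · simp only [hfd]
      split_ifs with h
      · have hy1 : y ≤ 1 := by
          rw [lt_div_iff₀ hy] at h
          by_contra hcon
          push Not at hcon
          nlinarith
        have hxy : x ^ b * (x / y) ^ (-b) = y ^ b := by
          rw [Real.rpow_neg (by positivity), Real.div_rpow hx0.le hy.le]
          have : 0 < x ^ b := by positivity
          have : 0 < y ^ b := by positivity
          field_simp
        have hUz := hU0 (x / y)
        calc U (x / y) * (H y / y) ≤ U (x / y) * (C * y ^ b / y) := by
              gcongr; exact hC1 y hy hy1
          _ = _ := by rw [← hxy]; ring
      · simp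
  have hDm : Measurable D := by
    simp only [hD]
    exact (((hUm.comp (measurable_const.div measurable_id)).mul hm).div measurable_id).sub
      (by fun_prop)
  have hDi : IntegrableOn D (Set.Ioi 0) :=
    Integrable.mono' hGi hDm.aestronglyMeasurable
      ((ae_restrict_iff' measurableSet_Ioi).2 (Eventually.of_forall fun y hy => hDG y hy))
  have hVI : IntegrableOn (fun y => V * (y ^ (-a - 1) * H y)) (Set.Ioi 0) := hI.const_mul _
  have hconv : mellinConv U H x - (∫ y in Set.Ioi (0:ℝ), y ^ (-a - 1) * H y) * V =
      ∫ y in Set.Ioi (0:ℝ), D y := by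
    have h1 : mellinConv U H x = ∫ y in Set.Ioi (0:ℝ), (D y + V * (y ^ (-a - 1) * H y)) := by
      unfold mellinConv
      refine setIntegral_congr_fun measurableSet_Ioi fun y _ => ?_
      simp only [hD]; ring
    rw [h1, integral_add hDi hVI, integral_const_mul]; ring
  rw [hconv, Real.norm_of_nonneg hE0.le]
  have hxb' : x ^ b ≤ K₃ * E :=
    (Real.rpow_le_rpow_of_exponent_ge hx0 (by linarith) (by linarith)).trans hxb
  calc _ ≤ ∫ y in Set.Ioi (0:ℝ), G y :=
        norm_integral_le_of_norm_le hGi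
          ((ae_restrict_iff' measurableSet_Ioi).2 (Eventually.of_forall fun y hy => hDG y hy))
    _ = K * E * J + C * x ^ b * W := hGint
    _ ≤ K * E * J + C * (K₃ * E) * W := by gcongr
    _ = _ := by ring

/-- Theorem: density asymptotics at zero when the Heston part
dominates, `Ã₃ < η₂ − 1`.  Let `U` be a probability density on `(0,∞)` with the
Heston-type asymptotics at infinity and zero, and let
`D(x) = e^{−λt} U(x) + (U ⋆_M H(t,·))(x)`.  Then the moment `m_{−Ã₃−1}(H(t,·))` is
finite and
`D(x) = [e^{−λt} + m_{−Ã₃−1}(H(t,·))] B̃₁ x^{Ã₃} exp{Ã₂√(log(1/x))} (log(1/x))^κ`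
`· (1 + O((log(1/x))^{−1/2}))` as `x → 0`. -/
theorem density_asymptotics_heston_dominates_at_zero
    (t lam η₁ η₂ p q : ℝ) (U : ℝ → ℝ) (B₁ Bt₁ A₂ At₂ A₃ At₃ κ : ℝ)
    (ht : 0 < t) (hlam : 0 < lam) (hη₁ : 1 < η₁) (hη₂ : 0 < η₂)
    (hp : 0 < p) (hq : 0 < q) (hpq : p + q = 1)
    (hB₁ : 0 < B₁) (hBt₁ : 0 < Bt₁) (hA₃ : 2 < A₃) (hAt₃ : -1 < At₃)
    (hdom : At₃ < η₂ - 1)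
    (hU_meas : Measurable U) (hU_nonneg : ∀ x, 0 ≤ U x)
    (hU_prob : (∫ x in Set.Ioi (0:ℝ), U x) = 1)
    -- `U(x) = B₁ x^{−A₃} exp{A₂√(log x)} (log x)^κ (1 + O((log x)^{−1/2}))` as `x → ∞`
    (hU_infty : (fun x => U x -
        B₁ * x ^ (-A₃) * Real.exp (A₂ * Real.sqrt (Real.log x)) * (Real.log x) ^ κ)
      =O[atTop] (fun x =>
        B₁ * x ^ (-A₃) * Real.exp (A₂ * Real.sqrt (Real.log x)) * (Real.log x) ^ κ *
          (Real.log x) ^ (-(1:ℝ)/2)))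
    -- `U(x) = B̃₁ x^{Ã₃} exp{Ã₂√(log(1/x))} (log(1/x))^κ (1 + O((log(1/x))^{−1/2}))` as `x → 0`
    (hU_zero : (fun x => U x -
        Bt₁ * x ^ At₃ * Real.exp (At₂ * Real.sqrt (Real.log x⁻¹)) * (Real.log x⁻¹) ^ κ)
      =O[nhdsWithin 0 (Set.Ioi 0)] (fun x =>
        Bt₁ * x ^ At₃ * Real.exp (At₂ * Real.sqrt (Real.log x⁻¹)) * (Real.log x⁻¹) ^ κ *
          (Real.log x⁻¹) ^ (-(1:ℝ)/2))) :
    MeasureTheory.IntegrableOn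
      (fun x => x ^ (-At₃ - 1) * Hfun lam t η₁ η₂ p q x) (Set.Ioi 0) ∧
    (fun x => (Real.exp (-(lam * t)) * U x +
        mellinConv U (Hfun lam t η₁ η₂ p q) x) -
        (Real.exp (-(lam * t)) +
            ∫ y in Set.Ioi (0:ℝ), y ^ (-At₃ - 1) * Hfun lam t η₁ η₂ p q y) *
          Bt₁ * x ^ At₃ * Real.exp (At₂ * Real.sqrt (Real.log x⁻¹)) *
          (Real.log x⁻¹) ^ κ)
      =O[nhdsWithin 0 (Set.Ioi 0)]
      (fun x =>
        (Real.exp (-(lam * t)) +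
            ∫ y in Set.Ioi (0:ℝ), y ^ (-At₃ - 1) * Hfun lam t η₁ η₂ p q y) *
          Bt₁ * x ^ At₃ * Real.exp (At₂ * Real.sqrt (Real.log x⁻¹)) *
          (Real.log x⁻¹) ^ κ * (Real.log x⁻¹) ^ (-(1:ℝ)/2)) := by

  obtain ⟨m, n, hb⟩ := Hfun_props lam t η₁ η₂ p q (by positivity) (by linarith) hη₂ hp hq hpq
  have hUi : IntegrableOn U (Set.Ioi 0) := by
    by_contra h
    rw [integral_undef h] at hU_prob
    norm_num at hU_prob
  obtain ⟨hI, hO⟩ := aux_core U (Hfun lam t η₁ η₂ p q) Bt₁ At₂ At₃ κ η₁ η₂ hη₁ hBt₁ hAt₃ hdom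
    hU_meas hU_nonneg hUi hU_zero m n hb
  refine ⟨hI, ?_⟩
  have hm0 : 0 ≤ ∫ y in Set.Ioi (0:ℝ), y ^ (-At₃ - 1) * Hfun lam t η₁ η₂ p q y :=
    setIntegral_nonneg measurableSet_Ioi fun y hy =>
      mul_nonneg (Real.rpow_nonneg (le_of_lt hy) _) (n y hy)
  set I := ∫ y in Set.Ioi (0:ℝ), y ^ (-At₃ - 1) * Hfun lam t η₁ η₂ p q y with hId
  have hc : Real.exp (-(lam * t)) + I ≠ 0 := by positivity
  have h1 := ((hU_zero.const_mul_left (Real.exp (-(lam * t)))).add hO).const_mul_right hc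
  refine (h1.congr_left fun x => ?_).congr_right fun x => ?_
  · ring
  · ring
end
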